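/- Suppose the family {ρ_{x,s}} satisfies Assumption A. Then for every ε ∈ (0,1) and every probability distribution P on 𝒳, the limit lim_{n→∞} −(1/n)·log₂ β_n(ε) exists and equals inf_Q I[X;B]_{P,Q}, where the infimum is over all finitely supported probability distributions Q on 𝒮. -/

import Mathlib

open Filter
open scoped ComplexOrder

noncomputable section

/-- A density matrix: positive semidefinite with unit trace. -/
def IsDensity {m : Type*} [Fintype m] (ρ : Matrix m m ℂ) : Prop :=
  ρ.PosSemidef ∧ ρ.trace = 1

/-- Loewner order `A ⪯ B`. -/
def Loewner {m : Type*} [Fintype m] (A B : Matrix m m ℂ) : Prop :=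
  (B - A).PosSemidef

/-- Functional calculus for Hermitian matrices (junk value `0` on non-Hermitian input). -/
def matFun {m : Type*} [Fintype m] [DecidableEq m] (f : ℝ → ℝ) (A : Matrix m m ℂ) :
    Matrix m m ℂ :=
  if hA : A.IsHermitian then
    (hA.eigenvectorUnitary : Matrix m m ℂ) *
        Matrix.diagonal (fun i => (f (hA.eigenvalues i) : ℂ)) *
      star (hA.eigenvectorUnitary : Matrix m m ℂ)
  else 0

/-- Base-2 matrix logarithm, taken on the support. -/
def mlog2 {m : Type*} [Fintype m] [DecidableEq m] (A : Matrix m m ℂ) : Matrix m m ℂ :=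
  matFun (fun u => if u ≤ 0 then 0 else Real.logb 2 u) A

/-- Quantum relative entropy `D(ρ‖σ) = Tr[ρ(log₂ρ − log₂σ)]` (logarithms on supports). -/
def relEnt {m : Type*} [Fintype m] [DecidableEq m] (ρ σ : Matrix m m ℂ) : ℝ :=
  (Matrix.trace (ρ * (mlog2 ρ - mlog2 σ))).re

/-- The classical–quantum state `Σ_x w(x) |x⟩⟨x| ⊗ ρ_x`. -/
def cqState {X B : Type*} [DecidableEq X] (w : X → ℝ) (ρ : X → Matrix B B ℂ) :
    Matrix (X × B) (X × B) ℂ :=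
  Matrix.of fun p q => (if p.1 = q.1 then ((w p.1 : ℝ) : ℂ) else 0) * ρ p.1 p.2 q.2

/-- Tensor product of a finite family of matrices, realized on functions. -/
def tensorFam {k d : Type*} [Fintype k] (ρ : k → Matrix d d ℂ) :
    Matrix (k → d) (k → d) ℂ :=
  Matrix.of fun i j => ∏ a, ρ a (i a) (j a)

/-- Finitely supported probability distributions on `𝒮`. -/
abbrev FinProb (𝒮 : Type*) : Type _ :=
  {Q : 𝒮 →₀ ℝ // (∀ s, 0 ≤ Q s) ∧ Q.sum (fun _ a => a) = 1}

/-- Assumption A. -/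
def AssumptionA {𝒳 𝒮 : Type*} {d : ℕ} (ρ : 𝒳 → 𝒮 → Matrix (Fin d) (Fin d) ℂ) : Prop :=
  ∀ ε : ℝ, 0 < ε → ∃ Sε : Finset 𝒮, ∀ s : 𝒮, ∃ s' ∈ Sε, ∀ x : 𝒳,
    Loewner (ρ x s) ((1 + ε) • ρ x s')

/-- The mutual information `I[X;B]_{P,Q}`. -/
def mutInfI {𝒳 𝒮 : Type*} [Fintype 𝒳] [DecidableEq 𝒳] {d : ℕ}
    (ρ : 𝒳 → 𝒮 → Matrix (Fin d) (Fin d) ℂ) (P : 𝒳 → ℝ) (Q : 𝒮 →₀ ℝ) : ℝ :=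
  relEnt (cqState P (fun x => Q.sum fun s w => w • ρ x s))
    (cqState P (fun _ => ∑ x, P x • (Q.sum fun s w => w • ρ x s)))

/-- The optimal type-II error `β_n(ε)` of the universal independence test. -/
def betaN {𝒳 𝒮 : Type*} [Fintype 𝒳] [DecidableEq 𝒳] {d : ℕ}
    (ρ : 𝒳 → 𝒮 → Matrix (Fin d) (Fin d) ℂ) (P : 𝒳 → ℝ) (ε : ℝ) (n : ℕ) : ℝ :=
  sInf { v : ℝ |
    ∃ T : Matrix ((Fin n → 𝒳) × (Fin n → Fin d)) ((Fin n → 𝒳) × (Fin n → Fin d)) ℂ,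
      T.PosSemidef ∧ (1 - T).PosSemidef ∧
      (∀ sv : Fin n → 𝒮,
        (Matrix.trace ((1 - T) *
          cqState (fun xv : Fin n → 𝒳 => ∏ k, P (xv k))
            (fun xv => tensorFam fun k => ρ (xv k) (sv k)))).re ≤ ε) ∧
      v = ⨆ σ : {σ : Matrix (Fin n → Fin d) (Fin n → Fin d) ℂ // IsDensity σ},
        (Matrix.trace (T * cqState (fun xv : Fin n → 𝒳 => ∏ k, P (xv k)) (fun _ => σ.1))).re }

set_option linter.unusedSectionVars false

section Scalars

lemma exp_quad (u : ℝ) : Real.exp u ≤ 1 + u + u ^ 2 * Real.exp |u| := by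
  have h := Complex.norm_exp_sub_sum_le_norm_mul_exp (u : ℂ) 2
  simp only [Finset.sum_range_succ, Finset.sum_range_zero] at h
  have e : Complex.exp (u : ℂ) - (0 + (u : ℂ) ^ 0 / (Nat.factorial 0 : ℂ) + (u : ℂ) ^ 1 / (Nat.factorial 1 : ℂ))
      = ((Real.exp u - 1 - u : ℝ) : ℂ) := by
    push_cast; simp; ring
  rw [e, Complex.norm_real, Complex.norm_real, Real.norm_eq_abs, Real.norm_eq_abs, sq_abs] at h
  have := le_abs_self (Real.exp u - 1 - u)
  linarith

/-- moment generating bound -/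
lemma mgf_bound {α : Type*} [Fintype α] (p : α → ℝ) (hp : ∀ a, 0 ≤ p a) (hp1 : ∑ a, p a = 1)
    (L : α → ℝ) (K : ℝ) (hK : ∑ a, p a * (L a ^ 2 * Real.exp (|L a| / 2)) ≤ K)
    (t : ℝ) (ht0 : 0 ≤ t) (ht : t ≤ 1 / 2) :
    ∑ a, p a * Real.exp (t * L a) ≤ Real.exp (t * (∑ a, p a * L a) + t ^ 2 * K) := by
  have h1 : ∑ a, p a * Real.exp (t * L a)
      ≤ ∑ a, (p a + t * (p a * L a) + t ^ 2 * (p a * (L a ^ 2 * Real.exp (|L a| / 2)))) := by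
    refine Finset.sum_le_sum fun a _ => ?_
    have h := exp_quad (t * L a)
    have h2 : Real.exp |t * L a| ≤ Real.exp (|L a| / 2) := by
      apply Real.exp_le_exp.mpr
      rw [abs_mul, abs_of_nonneg ht0]
      nlinarith [abs_nonneg (L a)]
    have h3 : (t * L a) ^ 2 * Real.exp |t * L a| ≤ (t * L a) ^ 2 * Real.exp (|L a| / 2) :=
      mul_le_mul_of_nonneg_left h2 (sq_nonneg _)
    have h4 := mul_le_mul_of_nonneg_left (h.trans (add_le_add_right h3 _)) (hp a)
    calc _ ≤ _ := h4
      _ = _ := by ring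
  rw [Finset.sum_add_distrib, Finset.sum_add_distrib, ← Finset.mul_sum, ← Finset.mul_sum, hp1] at h1
  have h5 : t ^ 2 * ∑ a, p a * (L a ^ 2 * Real.exp (|L a| / 2)) ≤ t ^ 2 * K :=
    mul_le_mul_of_nonneg_left hK (sq_nonneg _)
  have h6 := Real.add_one_le_exp (t * (∑ a, p a * L a) + t ^ 2 * K)
  linarith

lemma prod_sum_pi {α : Type*} [Fintype α] (n : ℕ) (f : α → ℝ) :
    ∑ v : Fin n → α, ∏ k, f (v k) = (∑ a, f a) ^ n := by
  classical
  have := Finset.prod_univ_sum (fun _ : Fin n => (Finset.univ : Finset α)) (fun _ a => f a)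
  rw [Fintype.piFinset_univ] at this
  rw [← this]; simp

/-- Chernoff tail bound -/
lemma tail_bound {α : Type*} [Fintype α] (p : α → ℝ) (hp : ∀ a, 0 ≤ p a) (hp1 : ∑ a, p a = 1)
    (L : α → ℝ) (K : ℝ) (hK : ∑ a, p a * (L a ^ 2 * Real.exp (|L a| / 2)) ≤ K)
    (δ : ℝ) (hδ : 0 < δ) (hδK : δ ≤ K) (n : ℕ) (S : Set (Fin n → α)) [DecidablePred (· ∈ S)]
    (hS : ∀ v ∈ S, n * ((∑ a, p a * L a) + δ) ≤ ∑ k, L (v k)) :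
    ∑ v : Fin n → α, (if v ∈ S then ∏ k, p (v k) else 0) ≤ Real.exp (-(n * (δ ^ 2 / (4 * K)))) := by
  have hKpos : 0 < K := hδ.trans_le hδK
  set t := δ / (2 * K) with ht
  have ht0 : 0 ≤ t := by positivity
  have ht1 : t ≤ 1 / 2 := by
    rw [ht, div_le_div_iff₀ (by positivity) (by norm_num)]; linarith
  set m := ∑ a, p a * L a
  have h1 : ∀ v : Fin n → α, (if v ∈ S then ∏ k, p (v k) else 0)
      ≤ Real.exp (-(t * (n * (m + δ)))) * ∏ k, (p (v k) * Real.exp (t * L (v k))) := by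
    intro v
    have hpp : 0 ≤ ∏ k, p (v k) := Finset.prod_nonneg fun k _ => hp _
    split_ifs with hv
    · rw [Finset.prod_mul_distrib, ← Real.exp_sum, ← Finset.mul_sum, mul_left_comm, ← Real.exp_add]
      have : 1 ≤ Real.exp (-(t * (n * (m + δ))) + t * ∑ k, L (v k)) := by
        apply Real.one_le_exp
        have := mul_le_mul_of_nonneg_left (hS v hv) ht0
        linarith
      nlinarith
    · exact mul_nonneg (Real.exp_nonneg _) (Finset.prod_nonneg fun k _ => mul_nonneg (hp _) (Real.exp_nonneg _))
  refine (Finset.sum_le_sum fun v _ => h1 v).trans ?_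
  rw [← Finset.mul_sum, prod_sum_pi n (fun a => p a * Real.exp (t * L a))]
  have h2 := mgf_bound p hp hp1 L K hK t ht0 ht1
  have h3 : (∑ a, p a * Real.exp (t * L a)) ^ n ≤ (Real.exp (t * m + t ^ 2 * K)) ^ n :=
    pow_le_pow_left₀ (Finset.sum_nonneg fun a _ => mul_nonneg (hp _) (Real.exp_nonneg _)) h2 n
  refine (mul_le_mul_of_nonneg_left h3 (Real.exp_nonneg _)).trans ?_
  rw [← Real.exp_nat_mul, ← Real.exp_add]
  apply le_of_eq
  congr 1
  rw [ht]; field_simp; ring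

/-- `r (log r)^2 e^{|log r|/2} ≤ 16` on `[0,1]`. -/
lemma log_sq_bound (r : ℝ) (h0 : 0 ≤ r) (h1 : r ≤ 1) :
    r * (Real.log r ^ 2 * Real.exp (|Real.log r| / 2)) ≤ 16 := by
  rcases h0.eq_or_lt with h | h
  · simp [← h]
  have hl : Real.log r ≤ 0 := Real.log_nonpos h0 h1
  set u := -Real.log r with hu
  have hr : r = Real.exp (-u) := by rw [hu, neg_neg, Real.exp_log h]
  have hl2 : Real.log r = -u := by rw [hu]; ring
  have hu0 : 0 ≤ u := by linarith
  rw [hl2, abs_neg, abs_of_nonneg hu0, hr]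
  have h3 : u ≤ 4 * Real.exp (u / 4) := by
    have := Real.add_one_le_exp (u / 4); linarith
  have h4 : u ^ 2 ≤ (4 * Real.exp (u / 4)) ^ 2 := pow_le_pow_left₀ hu0 h3 2
  have h5 : (4 * Real.exp (u / 4)) ^ 2 = 16 * Real.exp (u / 2) := by
    rw [mul_pow, ← Real.exp_nat_mul]; norm_num; ring_nf
  rw [h5] at h4
  have h6 : Real.exp (-u) * ((-u) ^ 2 * Real.exp (u / 2)) = u ^ 2 * Real.exp (-u / 2) := by
    rw [mul_left_comm, ← Real.exp_add]; ring_nf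
  rw [h6]
  calc _ ≤ 16 * Real.exp (u / 2) * Real.exp (-u / 2) := mul_le_mul_of_nonneg_right h4 (Real.exp_nonneg _)
    _ = 16 := by rw [mul_assoc, ← Real.exp_add]; ring_nf; simp

/-- Stirling-type bound. -/
lemma fact_bound_aux (N : ℕ) (h : 1 ≤ N) :
    Real.exp N * (N.factorial : ℝ) ≤ Real.exp 1 * N * (N : ℝ) ^ N := by
  induction N, h using Nat.le_induction with
  | base => simp
  | succ N h ih =>
    have hN : (0 : ℝ) < N := by exact_mod_cast h
    have key : Real.exp 1 * (N : ℝ) ^ (N+1) ≤ ((N : ℝ) + 1) ^ (N+1) := by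
      have h1 : Real.exp (1 / ((N:ℝ) + 1)) ≤ ((N:ℝ) + 1) / N := by
        have h2 := Real.add_one_le_exp (-(1 / ((N:ℝ) + 1)))
        rw [Real.exp_neg] at h2
        have h3 : -(1 / ((N:ℝ) + 1)) + 1 = N / (N + 1) := by field_simp; ring
        rw [h3] at h2
        have h4 := inv_anti₀ (by positivity) h2
        rwa [inv_inv, inv_div] at h4
      have h5 := pow_le_pow_left₀ (Real.exp_nonneg _) h1 (N+1)
      rw [← Real.exp_nat_mul, div_pow, le_div_iff₀ (by positivity)] at h5
      have h6 : ((N+1 : ℕ) : ℝ) * (1 / ((N:ℝ) + 1)) = 1 := by push_cast; field_simp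
      rwa [h6] at h5
    rw [Nat.factorial_succ]
    push_cast
    rw [Real.exp_add]
    have hE := Real.exp_pos 1
    calc Real.exp N * Real.exp 1 * ((N + 1) * (N.factorial : ℝ))
        = (Real.exp N * N.factorial) * (Real.exp 1 * (N + 1)) := by ring
      _ ≤ (Real.exp 1 * N * (N : ℝ) ^ N) * (Real.exp 1 * (N + 1)) := by gcongr
      _ = (Real.exp 1 * (N + 1)) * (Real.exp 1 * (N : ℝ) ^ (N+1)) := by ring
      _ ≤ (Real.exp 1 * (N + 1)) * ((N : ℝ) + 1) ^ (N+1) := by gcongr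

lemma fact_bound (N : ℕ) : Real.exp N * (N.factorial : ℝ) ≤ Real.exp 1 * (N + 1) * (N : ℝ) ^ N := by
  rcases Nat.eq_zero_or_pos N with h | h
  · subst h; simp
  · refine (fact_bound_aux N h).trans ?_
    have := Real.exp_pos 1
    gcongr
    linarith

lemma pow_le_fact (n : ℕ) : (n : ℝ) ^ n ≤ Real.exp n * n.factorial := by
  have := Real.pow_div_factorial_le_exp (n : ℝ) (by positivity) n
  rwa [div_le_iff₀ (by positivity)] at this

end Scalars

section Ops
open scoped MatrixOrder Matrix
open Matrix

variable {m : Type*} [Fintype m] [DecidableEq m]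

/-- real trace -/
def rtr {m : Type*} [Fintype m] (A : Matrix m m ℂ) : ℝ := (Matrix.trace A).re

lemma rtr_add (A B : Matrix m m ℂ) : rtr (A + B) = rtr A + rtr B := by simp [rtr]
lemma rtr_sub (A B : Matrix m m ℂ) : rtr (A - B) = rtr A - rtr B := by simp [rtr]
lemma rtr_smul (c : ℝ) (A : Matrix m m ℂ) : rtr (c • A) = c * rtr A := by
  simp [rtr, Matrix.trace_smul]
lemma rtr_sum {ι : Type*} (s : Finset ι) (f : ι → Matrix m m ℂ) :
    rtr (∑ i ∈ s, f i) = ∑ i ∈ s, rtr (f i) := by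
  simp [rtr, Matrix.trace_sum]

lemma rtr_nonneg {A : Matrix m m ℂ} (h : 0 ≤ A) : 0 ≤ rtr A := by
  have := (Matrix.nonneg_iff_posSemidef.mp h).trace_nonneg
  exact (Complex.le_def.mp this).1

lemma conj_nonneg {A : Matrix m m ℂ} (h : 0 ≤ A) (B : Matrix m m ℂ) : 0 ≤ Bᴴ * A * B :=
  ((Matrix.nonneg_iff_posSemidef.mp h).conjTranspose_mul_mul_same B).nonneg

lemma herm_of_nonneg {A : Matrix m m ℂ} (h : 0 ≤ A) : Aᴴ = A :=
  (Matrix.nonneg_iff_posSemidef.mp h).isHermitian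

lemma conj_nonneg' {A B : Matrix m m ℂ} (h : 0 ≤ A) (hB : Bᴴ = B) : 0 ≤ B * A * B := by
  have := conj_nonneg h B
  rwa [hB] at this

lemma conj_mono {A A' : Matrix m m ℂ} (h : A ≤ A') (B : Matrix m m ℂ) :
    Bᴴ * A * B ≤ Bᴴ * A' * B := by
  have := conj_nonneg (sub_nonneg.mpr h) B
  rw [mul_sub, sub_mul] at this
  exact sub_nonneg.mp this

lemma exists_sq {A : Matrix m m ℂ} (h : 0 ≤ A) : ∃ C : Matrix m m ℂ, A = Cᴴ * C := by
  exact CStarAlgebra.nonneg_iff_eq_star_mul_self.mp h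

lemma rtr_mul_nonneg {A B : Matrix m m ℂ} (hA : 0 ≤ A) (hB : 0 ≤ B) : 0 ≤ rtr (A * B) := by
  obtain ⟨C, rfl⟩ := exists_sq hB
  have : rtr (A * (Cᴴ * C)) = rtr (C * A * Cᴴ) := by
    unfold rtr
    rw [← mul_assoc, Matrix.trace_mul_comm, mul_assoc]
  rw [this]
  have := conj_nonneg hA Cᴴ
  rw [conjTranspose_conjTranspose] at this
  exact rtr_nonneg this

lemma rtr_mul_mono {A A' B : Matrix m m ℂ} (hA : A ≤ A') (hB : 0 ≤ B) :
    rtr (A * B) ≤ rtr (A' * B) := by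
  have := rtr_mul_nonneg (sub_nonneg.mpr hA) hB
  rw [sub_mul, rtr_sub] at this
  linarith

lemma rtr_mul_mono' {A B B' : Matrix m m ℂ} (hB : B ≤ B') (hA : 0 ≤ A) :
    rtr (A * B) ≤ rtr (A * B') := by
  have := rtr_mul_nonneg hA (sub_nonneg.mpr hB)
  rw [mul_sub, rtr_sub] at this
  linarith

lemma smul_nn {c : ℝ} (hc : 0 ≤ c) {A : Matrix m m ℂ} (h : 0 ≤ A) : 0 ≤ c • A :=
  ((Matrix.nonneg_iff_posSemidef.mp h).smul hc).nonneg

lemma smul_mono' {c : ℝ} (hc : 0 ≤ c) {A B : Matrix m m ℂ} (h : A ≤ B) : c • A ≤ c • B := by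
  have := smul_nn hc (sub_nonneg.mpr h)
  rw [smul_sub] at this
  exact sub_nonneg.mp this

lemma one_nn : (0 : Matrix m m ℂ) ≤ 1 := Matrix.PosSemidef.one.nonneg

/-- `U diag(a) U*`. -/
def spec (U : Matrix m m ℂ) (a : m → ℝ) : Matrix m m ℂ :=
  U * Matrix.diagonal (fun i => (a i : ℂ)) * Uᴴ

lemma spec_add (U : Matrix m m ℂ) (a b : m → ℝ) : spec U (a + b) = spec U a + spec U b := by
  unfold spec
  rw [← add_mul, ← mul_add, Matrix.diagonal_add]
  simp

lemma spec_sub (U : Matrix m m ℂ) (a b : m → ℝ) : spec U (a - b) = spec U a - spec U b := by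
  unfold spec
  rw [← sub_mul, ← mul_sub, Matrix.diagonal_sub]
  simp

lemma spec_smul (U : Matrix m m ℂ) (c : ℝ) (a : m → ℝ) : spec U (c • a) = c • spec U a := by
  unfold spec
  rw [← smul_mul_assoc, ← mul_smul_comm, ← Matrix.diagonal_smul]
  congr; ext i; simp

lemma spec_one {U : Matrix m m ℂ} (hU : U * Uᴴ = 1) : spec U 1 = 1 := by
  unfold spec
  simp [hU]

lemma spec_mul {U : Matrix m m ℂ} (hU : Uᴴ * U = 1) (a b : m → ℝ) :
    spec U a * spec U b = spec U (a * b) := by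
  unfold spec
  calc _ = U * diagonal (fun i => (a i : ℂ)) * (Uᴴ * U) * diagonal (fun i => (b i : ℂ)) * Uᴴ := by
        simp only [mul_assoc]
    _ = _ := by
        rw [hU, mul_one, mul_assoc U, Matrix.diagonal_mul_diagonal]; simp

lemma spec_nonneg (U : Matrix m m ℂ) {a : m → ℝ} (ha : 0 ≤ a) : 0 ≤ spec U a := by
  have h : 0 ≤ diagonal (fun i => (a i : ℂ)) :=
    (Matrix.PosSemidef.diagonal (fun i => by simpa using ha i)).nonneg
  have := conj_nonneg h Uᴴ
  rwa [conjTranspose_conjTranspose] at this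

lemma spec_mono (U : Matrix m m ℂ) {a b : m → ℝ} (h : a ≤ b) : spec U a ≤ spec U b := by
  have := spec_nonneg U (sub_nonneg.mpr h)
  rw [spec_sub] at this
  exact sub_nonneg.mp this

lemma spec_herm (U : Matrix m m ℂ) (a : m → ℝ) : (spec U a)ᴴ = spec U a := by
  unfold spec
  rw [conjTranspose_mul, conjTranspose_mul, conjTranspose_conjTranspose, diagonal_conjTranspose, mul_assoc]
  congr; ext i; simp

lemma rtr_spec {U : Matrix m m ℂ} (hU : Uᴴ * U = 1) (a : m → ℝ) : rtr (spec U a) = ∑ i, a i := by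
  unfold spec rtr
  rw [Matrix.trace_mul_comm, ← mul_assoc, hU, one_mul, Matrix.trace_diagonal]
  simp

lemma exists_spec {A : Matrix m m ℂ} (hA : 0 ≤ A) :
    ∃ (U : Matrix m m ℂ) (a : m → ℝ), Uᴴ * U = 1 ∧ U * Uᴴ = 1 ∧ (∀ i, 0 ≤ a i) ∧ A = spec U a := by
  have h := Matrix.nonneg_iff_posSemidef.mp hA
  refine ⟨h.isHermitian.eigenvectorUnitary, h.isHermitian.eigenvalues, ?_, ?_, ?_, ?_⟩
  · exact Unitary.coe_star_mul_self _
  · exact Unitary.coe_mul_star_self _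
  · exact h.eigenvalues_nonneg
  · conv_lhs => rw [h.isHermitian.spectral_theorem]
    rw [Unitary.conjStarAlgAut_apply]
    rfl

/-- functional calculus is independent of the diagonalization -/
lemma matFun_spec {U : Matrix m m ℂ} (hU : Uᴴ * U = 1) (hU' : U * Uᴴ = 1) (a : m → ℝ) (f : ℝ → ℝ) :
    matFun f (spec U a) = spec U (fun i => f (a i)) := by
  have hH : (spec U a).IsHermitian := spec_herm U a
  unfold matFun
  rw [dif_pos hH]
  set V : Matrix m m ℂ := (hH.eigenvectorUnitary : Matrix m m ℂ) with hV
  set b := hH.eigenvalues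
  have hV1 : Vᴴ * V = 1 := Unitary.coe_star_mul_self _
  have hV2 : V * Vᴴ = 1 := Unitary.coe_mul_star_self _
  have hs : spec U a = V * diagonal (fun i => (b i : ℂ)) * Vᴴ := by
    conv_lhs => rw [hH.spectral_theorem]
    rw [Unitary.conjStarAlgAut_apply]
    rfl
  unfold spec at hs
  set M := Vᴴ * U with hM
  have h1 : M * diagonal (fun i => (a i : ℂ)) = diagonal (fun i => (b i : ℂ)) * M := by
    calc M * diagonal (fun i => (a i : ℂ)) = Vᴴ * (U * diagonal (fun i => (a i : ℂ)) * Uᴴ) * U := by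
          simp only [mul_assoc, hU, mul_one, hM]
      _ = (Vᴴ * V) * diagonal (fun i => (b i : ℂ)) * Vᴴ * U := by rw [hs]; simp only [mul_assoc]
      _ = _ := by rw [hV1, one_mul, mul_assoc]
  have h2 : M * diagonal (fun i => (f (a i) : ℂ)) = diagonal (fun i => (f (b i) : ℂ)) * M := by
    ext i j
    have h3 := congrFun (congrFun h1 i) j
    simp only [Matrix.mul_diagonal, Matrix.diagonal_mul] at h3 ⊢
    by_cases hz : M i j = 0
    · simp [hz]
    · have : (a j : ℂ) = b i := by
        rw [mul_comm] at h3; exact mul_right_cancel₀ hz h3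
      have : a j = b i := by exact_mod_cast this
      rw [this, mul_comm]
  change V * diagonal (fun i => (f (b i) : ℂ)) * Vᴴ = _
  unfold spec
  calc V * diagonal (fun i => (f (b i) : ℂ)) * Vᴴ
      = V * (diagonal (fun i => (f (b i) : ℂ)) * M) * Uᴴ := by
        simp only [mul_assoc, hM, hU', mul_one]
    _ = (V * Vᴴ) * U * diagonal (fun i => (f (a i) : ℂ)) * Uᴴ := by
        rw [← h2]; simp only [mul_assoc, hM]
    _ = _ := by rw [hV2, one_mul]

/-- `T² ≤ T` for effects -/
lemma sq_le_self {T : Matrix m m ℂ} (h0 : 0 ≤ T) (h1 : T ≤ 1) : T * T ≤ T := by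
  have a := conj_nonneg' (sub_nonneg.mpr h1) (herm_of_nonneg h0)
  have hb : (1 - T)ᴴ = 1 - T := herm_of_nonneg (sub_nonneg.mpr h1)
  have b := conj_nonneg' h0 hb
  have := add_nonneg a b
  rw [← sub_nonneg]
  convert this using 1
  noncomm_ring

/-- for `A, B` projections: `1 - ABA ≤ 3(1-A) + 2(1-B)`. -/
lemma aba_bound {A B : Matrix m m ℂ} (hA : Aᴴ = A) (hA2 : A * A = A) (hA1 : A ≤ 1) (hB0 : 0 ≤ B) (hB1 : B ≤ 1) :
    1 - A * B * A ≤ (3 : ℝ) • (1 - A) + (2 : ℝ) • (1 - B) := by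
  have hA' : (1 + 1 - A)ᴴ = 1 + 1 - A := by simp [hA]
  have h1 := conj_nonneg' (sub_nonneg.mpr hB1) hA'
  have h1' : (1 - A)ᴴ = 1 - A := by simp [hA]
  have h2 := conj_nonneg' hB0 h1'
  have h2 := add_nonneg h1 (add_nonneg h2 h2)
  rw [← sub_nonneg]
  convert h2 using 1
  have h3 : ∀ X : Matrix m m ℂ, (3 : ℝ) • X = X + X + X := fun X => by module
  have h4 : ∀ X : Matrix m m ℂ, (2 : ℝ) • X = X + X := fun X => by module
  rw [h3, h4]
  have e : (1 + 1 - A) * (1 - B) * (1 + 1 - A) + ((1 - A) * B * (1 - A) + (1 - A) * B * (1 - A))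
      = 1 + 1 + 1 + 1 - 4 * A + A * A - 2 * B + A * B * A := by noncomm_ring
  rw [e, hA2]
  noncomm_ring

lemma pinch_bound {A T : Matrix m m ℂ} (hA : Aᴴ = A) (hA2 : A * A = A) (hT0 : 0 ≤ T) (hT1 : T ≤ 1) :
    T ≤ (2 : ℝ) • (A * T * A) + (2 : ℝ) • (1 - A) := by
  have hA' : (2 * A - 1)ᴴ = 2 * A - 1 := by
    rw [two_mul]; simp [hA]
  have h1 := conj_nonneg' hT0 hA'
  have h1' : (1 - A)ᴴ = 1 - A := by simp [hA]
  have h2 := conj_nonneg' (sub_nonneg.mpr hT1) h1'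
  have h2 := add_nonneg h1 (add_nonneg h2 h2)
  rw [← sub_nonneg]
  convert h2 using 1
  have h4 : ∀ X : Matrix m m ℂ, (2 : ℝ) • X = X + X := fun X => by module
  rw [h4, h4]
  have e : (2 * A - 1) * T * (2 * A - 1) + ((1 - A) * (1 - T) * (1 - A) + (1 - A) * (1 - T) * (1 - A))
      = 2 * (A * T * A) - T + (1 + 1) - 4 * A + 2 * (A * A) := by noncomm_ring
  rw [e, hA2]
  noncomm_ring

/-- The union of tests. -/
lemma union_test {ι : Type*} [Fintype ι] (F : ι → Matrix m m ℂ) (h0 : ∀ q, 0 ≤ F q) (h1 : ∀ q, F q ≤ 1)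
    (c : ℝ) (hc : 0 < c) :
    ∃ T : Matrix m m ℂ, 0 ≤ T ∧ T ≤ 1 ∧ (∀ q, 1 - T ≤ (1 - F q) + c • 1) ∧ T ≤ c⁻¹ • ∑ q, F q := by
  have hinv : ∀ A : Matrix m m ℂ, 0 ≤ A → ∃ R : Matrix m m ℂ, 0 ≤ R ∧ (A + c • 1) * R = 1 ∧ R * (A + c • 1) = 1 := by
    intro A hA
    obtain ⟨U, a, hU, hU', ha, rfl⟩ := exists_spec hA
    have hc1 : spec U a + c • 1 = spec U (a + c • 1) := by
      rw [spec_add, spec_smul, spec_one hU']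
    have hpos : ∀ i, 0 < (a + c • (1 : m → ℝ)) i := fun i => by
      have := ha i
      simp; linarith
    have e : (a + c • 1) * (fun i => ((a + c • (1 : m → ℝ)) i)⁻¹) = 1 := by
      ext i
      simp only [Pi.mul_apply, Pi.one_apply]
      exact mul_inv_cancel₀ (hpos i).ne'
    refine ⟨spec U (fun i => ((a + c • (1 : m → ℝ)) i)⁻¹), spec_nonneg _ fun i => (inv_pos.mpr (hpos i)).le, ?_, ?_⟩
    · rw [hc1, spec_mul hU, e, spec_one hU']
    · rw [hc1, spec_mul hU, mul_comm, e, spec_one hU']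
  have hS : 0 ≤ ∑ q, F q := Finset.sum_nonneg fun q _ => h0 q
  set S := ∑ q, F q
  obtain ⟨R, hR0, hR1, hR2⟩ := hinv S hS
  have hRh := herm_of_nonneg hR0
  have eSR : S * R = 1 - c • R := by
    rw [add_mul, smul_mul_assoc, one_mul] at hR1
    rw [← hR1]; abel
  have eRS : R * S = 1 - c • R := by
    rw [mul_add, mul_smul_comm, mul_one] at hR2
    rw [← hR2]; abel
  -- T = 1 - cR = S R
  have hT0 : 0 ≤ 1 - c • R := by
    -- 1 - cR = R (S + c) S R = R S S R + c R S R
    have a1 : 0 ≤ R * S * (S * R) := by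
      have := conj_nonneg (one_nn (m := m)) (S * R)
      rw [conjTranspose_mul, hRh, herm_of_nonneg hS, mul_one] at this
      exact this
    have a2 := smul_nn hc.le (conj_nonneg' hS hRh)
    have := add_nonneg a1 a2
    convert this using 1
    rw [← smul_mul_assoc, ← smul_mul_assoc, ← eSR]
    calc S * R = R * (S + c • 1) * (S * R) := by rw [hR2, one_mul]
      _ = _ := by simp only [mul_add, add_mul, mul_smul_comm, smul_mul_assoc, mul_one, mul_assoc]
  refine ⟨1 - c • R, hT0, ?_, ?_, ?_⟩
  · rw [← sub_nonneg]; convert smul_nn hc.le hR0 using 1; abel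
  · intro q
    obtain ⟨G, hG0, hG1, hG2⟩ := hinv (F q) (h0 q)
    have hGh := herm_of_nonneg hG0
    have hle : F q + c • 1 ≤ S + c • 1 := by
      apply add_le_add_left
      exact Finset.single_le_sum (fun q _ => h0 q) (Finset.mem_univ q)
    have hFc : 0 ≤ F q + c • 1 := add_nonneg (h0 q) (smul_nn hc.le one_nn)
    have hRG : R ≤ G := by
      have b1 : 0 ≤ (G - R) * (F q + c • 1) * (G - R) := conj_nonneg' hFc (by simp [hGh, hRh])
      have b2 := conj_nonneg' (sub_nonneg.mpr hle) hRh
      have := add_nonneg b1 b2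
      rw [← sub_nonneg]
      convert this using 1
      set H := F q + c • 1
      set J := S + c • 1
      have : (G - R) * H * (G - R) + R * (J - H) * R
        = G * H * G - (G * H) * R - R * (H * G) + R * J * R := by noncomm_ring
      rw [this, hG1, hG2, hR2]; noncomm_ring
    have hG : c • G ≤ 1 - F q + c • 1 := by
      set T := F q with hT
      have hTh := herm_of_nonneg (h0 q)
      rw [← hT] at hTh
      have c1 : 0 ≤ T - T * T := sub_nonneg.mpr (sq_le_self (h0 q) (h1 q))
      have c2 := conj_nonneg' (sub_nonneg.mpr (h1 q)) hTh
      -- N = M (T - T² + c²)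
      have hN : 0 ≤ (T * (1 - T) * T + c ^ 2 • T) + (c • (T - T * T) + c ^ 3 • 1) :=
        add_nonneg (add_nonneg c2 (smul_nn (by positivity) (h0 q)))
          (add_nonneg (smul_nn hc.le c1) (smul_nn (by positivity) one_nn))
      have := conj_nonneg' hN hGh
      rw [← sub_nonneg]
      convert this using 1
      have e1 : (T * (1 - T) * T + c ^ 2 • T) + (c • (T - T * T) + c ^ 3 • 1)
          = (T + c • 1) * ((1 - T + c • 1) * (T + c • 1) - c • 1) := by
        simp only [mul_add, add_mul, mul_sub, sub_mul, mul_smul_comm, smul_mul_assoc, mul_one, one_mul, smul_add, smul_sub, smul_smul, mul_assoc]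
        module
      rw [e1]
      calc 1 - T + c • 1 - c • G = (G * (T + c • 1)) * ((1 - T + c • 1) * ((T + c • 1) * G) - c • G) := by
            rw [hG1, hG2, mul_one, one_mul]
        _ = _ := by
            simp only [mul_sub, sub_mul, mul_assoc, smul_mul_assoc, one_mul, mul_smul_comm]
    calc 1 - (1 - c • R) = c • R := by abel
      _ ≤ c • G := smul_mono' hc.le hRG
      _ ≤ _ := hG
  · -- T = S R ≤ S / c :  S/c - SR = S R S / c
    have h3 : 0 ≤ c⁻¹ • (S * R * S) := smul_nn (by positivity) (conj_nonneg' hR0 (herm_of_nonneg hS))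
    rw [← sub_nonneg]
    convert h3 using 1
    rw [mul_assoc, eRS, mul_sub, mul_one, mul_smul_comm, eSR, smul_sub, smul_smul, inv_mul_cancel₀ hc.ne', one_smul]

end Ops

section Tens
open scoped MatrixOrder Matrix
open Matrix

variable {κ δ : Type*} [Fintype κ] [DecidableEq κ] [Fintype δ] [DecidableEq δ]

lemma tensorFam_mul (A B : κ → Matrix δ δ ℂ) :
    tensorFam A * tensorFam B = tensorFam (fun k => A k * B k) := by
  ext i j
  simp only [tensorFam, Matrix.mul_apply, Matrix.of_apply]
  have := Finset.prod_univ_sum (fun _ : κ => (Finset.univ : Finset δ)) (fun k l => A k (i k) l * B k l (j k))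
  rw [Fintype.piFinset_univ] at this
  rw [this]
  simp only [Finset.prod_mul_distrib]

lemma tensorFam_conjT (A : κ → Matrix δ δ ℂ) : (tensorFam A)ᴴ = tensorFam (fun k => (A k)ᴴ) := by
  ext i j
  simp [tensorFam, Matrix.conjTranspose_apply]

lemma tensorFam_diag (a : κ → δ → ℂ) :
    tensorFam (fun k => diagonal (a k)) = diagonal (fun i => ∏ k, a k (i k)) := by
  ext i j
  simp only [tensorFam, Matrix.of_apply, Matrix.diagonal_apply]
  by_cases h : i = j
  · subst h; simp
  · rw [if_neg h]
    obtain ⟨k, hk⟩ := Function.ne_iff.mp h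
    exact Finset.prod_eq_zero (Finset.mem_univ k) (if_neg hk)

lemma tensorFam_one : tensorFam (fun _ : κ => (1 : Matrix δ δ ℂ)) = 1 := by
  have := tensorFam_diag (fun (_ : κ) (_ : δ) => (1 : ℂ))
  simp only [Finset.prod_const_one] at this
  rw [Matrix.diagonal_one] at this
  rw [this, Matrix.diagonal_one]

lemma tensorFam_spec (U : κ → Matrix δ δ ℂ) (a : κ → δ → ℝ) :
    tensorFam (fun k => spec (U k) (a k)) = spec (tensorFam U) (fun i => ∏ k, a k (i k)) := by
  unfold spec
  rw [← tensorFam_mul, ← tensorFam_mul, ← tensorFam_conjT, tensorFam_diag]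
  congr; ext i; simp

lemma tensorFam_unit {U : κ → Matrix δ δ ℂ} (h : ∀ k, (U k)ᴴ * U k = 1) :
    (tensorFam U)ᴴ * tensorFam U = 1 := by
  rw [tensorFam_conjT, tensorFam_mul]; simp only [h]; exact tensorFam_one

lemma tensorFam_unit' {U : κ → Matrix δ δ ℂ} (h : ∀ k, U k * (U k)ᴴ = 1) :
    tensorFam U * (tensorFam U)ᴴ = 1 := by
  rw [tensorFam_conjT, tensorFam_mul]; simp only [h]; exact tensorFam_one

lemma tensorFam_nonneg {A : κ → Matrix δ δ ℂ} (h : ∀ k, 0 ≤ A k) : 0 ≤ tensorFam A := by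
  choose C hC using fun k => exists_sq (h k)
  have : tensorFam A = (tensorFam C)ᴴ * tensorFam C := by
    rw [tensorFam_conjT, tensorFam_mul]; simp only [← hC]
  rw [this]
  exact (Matrix.posSemidef_conjTranspose_mul_self _).nonneg

lemma tensorFam_sum {ι : Type*} [Fintype ι] (M : κ → ι → Matrix δ δ ℂ) :
    tensorFam (fun k => ∑ a, M k a) = ∑ f : κ → ι, tensorFam (fun k => M k (f k)) := by
  classical
  ext i j
  simp only [tensorFam, Matrix.of_apply, Matrix.sum_apply]
  have := Finset.prod_univ_sum (fun _ : κ => (Finset.univ : Finset ι)) (fun k a => M k a (i k) (j k))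
  rw [Fintype.piFinset_univ] at this
  rw [this]

lemma tensorFam_smul (c : κ → ℝ) (M : κ → Matrix δ δ ℂ) :
    tensorFam (fun k => c k • M k) = (∏ k, c k) • tensorFam M := by
  ext i j
  simp [tensorFam, Matrix.of_apply, Finset.prod_mul_distrib]

lemma tensorFam_mono {A B : κ → Matrix δ δ ℂ} (hA : ∀ k, 0 ≤ A k) (h : ∀ k, A k ≤ B k) :
    tensorFam A ≤ tensorFam B := by
  have e : tensorFam B = ∑ f : κ → Bool, tensorFam (fun k => if f k then A k else B k - A k) := by
    rw [← tensorFam_sum (fun k b => if b = true then A k else B k - A k)]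
    congr; ext1 k; simp
  rw [e]
  have h0 : ∀ f : κ → Bool, 0 ≤ tensorFam (fun k => if f k then A k else B k - A k) := by
    intro f
    apply tensorFam_nonneg
    intro k
    split_ifs
    · exact hA k
    · exact sub_nonneg.mpr (h k)
  have := Finset.single_le_sum (fun f _ => h0 f) (Finset.mem_univ (fun _ : κ => true))
  simpa using this

lemma rtr_tensorFam {A : κ → Matrix δ δ ℂ} (h : ∀ k, (A k).trace = 1) : (tensorFam A).trace = 1 := by
  have := Finset.prod_univ_sum (fun _ : κ => (Finset.univ : Finset δ)) (fun k l => A k l l)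
  rw [Fintype.piFinset_univ] at this
  simp only [Matrix.trace, Matrix.diag, tensorFam, Matrix.of_apply] at h ⊢
  rw [← this]
  simp [h]

end Tens

section CQ
open scoped MatrixOrder Matrix
open Matrix

variable {X B : Type*} [Fintype X] [DecidableEq X] [Fintype B] [DecidableEq B]

/-- diagonal block -/
def blk (T : Matrix (X × B) (X × B) ℂ) (x : X) : Matrix B B ℂ := T.submatrix (Prod.mk x) (Prod.mk x)

lemma rtr_mul_cq (T : Matrix (X × B) (X × B) ℂ) (w : X → ℝ) (R : X → Matrix B B ℂ) :
    rtr (T * cqState w R) = ∑ x, w x * rtr (blk T x * R x) := by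
  unfold rtr
  simp only [Matrix.trace, Matrix.diag, Matrix.mul_apply, cqState, Matrix.of_apply, blk, Matrix.submatrix_apply,
    Fintype.sum_prod_type, Complex.re_sum, Finset.mul_sum]
  refine Finset.sum_congr rfl fun x _ => Finset.sum_congr rfl fun b _ => ?_
  rw [Finset.sum_eq_single x]
  · refine Finset.sum_congr rfl fun b' _ => ?_
    rw [if_pos rfl, ← mul_assoc, mul_comm (T _ _), mul_assoc, Complex.re_ofReal_mul]
  · intro y _ hy
    apply Finset.sum_eq_zero
    intro b' _
    simp [hy]
  · simp

lemma blk_nonneg {T : Matrix (X × B) (X × B) ℂ} (h : 0 ≤ T) (x : X) : 0 ≤ blk T x :=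
  ((Matrix.nonneg_iff_posSemidef.mp h).submatrix _).nonneg

lemma blk_one (x : X) : blk (1 : Matrix (X × B) (X × B) ℂ) x = 1 := by
  ext i j
  simp [blk, Matrix.one_apply]

lemma blk_sub (S T : Matrix (X × B) (X × B) ℂ) (x : X) : blk (S - T) x = blk S x - blk T x := rfl

lemma blk_cq (F : X → Matrix B B ℂ) (x : X) : blk (cqState 1 F) x = F x := by
  ext i j
  simp [blk, cqState]

lemma cq_mul (w w' : X → ℝ) (F G : X → Matrix B B ℂ) :
    cqState w F * cqState w' G = cqState (w * w') (fun x => F x * G x) := by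
  ext ⟨x, b⟩ ⟨y, c⟩
  simp only [cqState, Matrix.mul_apply, Matrix.of_apply, Fintype.sum_prod_type]
  rw [Finset.sum_eq_single x]
  · by_cases h : x = y
    · subst h
      simp only [if_true, Finset.mul_sum, Pi.mul_apply, Complex.ofReal_mul]
      refine Finset.sum_congr rfl fun _ _ => by ring
    · simp [h]
  · intro z _ hz
    simp [hz.symm]
  · simp

lemma cq_conjT (w : X → ℝ) (F : X → Matrix B B ℂ) : (cqState w F)ᴴ = cqState w (fun x => (F x)ᴴ) := by
  ext ⟨x, b⟩ ⟨y, c⟩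
  simp only [cqState, Matrix.conjTranspose_apply, Matrix.of_apply]
  by_cases h : x = y
  · subst h; simp
  · simp [h, Ne.symm h]

lemma cq_one : cqState 1 (fun _ : X => (1 : Matrix B B ℂ)) = 1 := by
  ext ⟨x, b⟩ ⟨y, c⟩
  by_cases h : x = y
  · subst h; simp [cqState, Matrix.one_apply]
  · simp [cqState, h]

lemma cq_sub (w : X → ℝ) (F G : X → Matrix B B ℂ) :
    cqState w F - cqState w G = cqState w (fun x => F x - G x) := by
  ext ⟨x, b⟩ ⟨y, c⟩
  simp [cqState, mul_sub]

lemma cq_nonneg {F : X → Matrix B B ℂ} (h : ∀ x, 0 ≤ F x) : 0 ≤ cqState 1 F := by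
  choose C hC using fun k => exists_sq (h k)
  have : cqState 1 F = (cqState 1 C)ᴴ * cqState 1 C := by
    rw [cq_conjT, cq_mul]; simp only [← hC, mul_one]
  rw [this]
  exact (Matrix.posSemidef_conjTranspose_mul_self _).nonneg

lemma cq_diag (w : X → ℝ) (r : X → B → ℝ) :
    cqState w (fun x => diagonal (fun i => (r x i : ℂ)))
      = diagonal (fun p : X × B => ((w p.1 * r p.1 p.2 : ℝ) : ℂ)) := by
  ext ⟨x, b⟩ ⟨y, c⟩
  simp only [cqState, Matrix.of_apply, Matrix.diagonal_apply, Prod.mk.injEq]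
  by_cases h : x = y <;> by_cases h' : b = c <;> simp [h, h']

lemma cq_spec (w : X → ℝ) (U : X → Matrix B B ℂ) (r : X → B → ℝ) :
    cqState w (fun x => spec (U x) (r x)) = spec (cqState 1 U) (fun p => w p.1 * r p.1 p.2) := by
  unfold spec
  rw [← cq_diag, cq_conjT, cq_mul, cq_mul]
  simp

/-- formula for the mutual information -/
lemma relEnt_formula (P : X → ℝ) (hP0 : ∀ x, 0 ≤ P x) (hP1 : ∑ x, P x = 1)
    (U : X → Matrix B B ℂ) (hU : ∀ x, (U x)ᴴ * U x = 1) (hU' : ∀ x, U x * (U x)ᴴ = 1)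
    (r : X → B → ℝ) (hr : ∀ x i, 0 ≤ r x i) (hr1 : ∀ x, ∑ i, r x i = 1)
    (V : Matrix B B ℂ) (hV : Vᴴ * V = 1) (hV' : V * Vᴴ = 1) (s : B → ℝ) (hs : ∀ i, 0 ≤ s i)
    (hsum : ∑ x, P x • spec (U x) (r x) = spec V s) :
    relEnt (cqState P (fun x => spec (U x) (r x))) (cqState P (fun _ => spec V s))
     = ((∑ x, P x * ∑ i, r x i * Real.log (r x i)) - ∑ j, s j * Real.log (s j)) / Real.log 2 := by
  have hW : (cqState 1 U)ᴴ * cqState 1 U = 1 := by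
    rw [cq_conjT, cq_mul]; simp only [hU, mul_one]; exact cq_one
  have hW' : cqState 1 U * (cqState 1 U)ᴴ = 1 := by
    rw [cq_conjT, cq_mul]; simp only [hU', mul_one]; exact cq_one
  have hZ : (cqState 1 (fun _ : X => V))ᴴ * cqState 1 (fun _ : X => V) = 1 := by
    rw [cq_conjT, cq_mul]; simp only [hV, mul_one]; exact cq_one
  have hZ' : cqState 1 (fun _ : X => V) * (cqState 1 (fun _ : X => V))ᴴ = 1 := by
    rw [cq_conjT, cq_mul]; simp only [hV', mul_one]; exact cq_one
  set g : ℝ → ℝ := fun u => if u ≤ 0 then 0 else Real.logb 2 u with hg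
  have hgl : ∀ u, 0 ≤ u → g u = Real.logb 2 u := by
    intro u hu
    simp only [hg]
    split_ifs with h
    · have : u = 0 := le_antisymm h hu
      simp [this]
    · rfl
  -- the diagonal of τ_x in the basis V
  set d : X → B → ℝ := fun x j => rtr (spec (U x) (r x) * spec V (Pi.single j 1)) with hd
  have hd0 : ∀ x j, 0 ≤ d x j := fun x j => rtr_mul_nonneg (spec_nonneg _ (hr x))
    (spec_nonneg _ (Pi.single_nonneg.mpr zero_le_one))
  have hdec : ∀ a : B → ℝ, spec V a = ∑ j, a j • spec V (Pi.single j 1) := by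
    intro a
    have : a = ∑ j, a j • (Pi.single j (1:ℝ) : B → ℝ) := by
      ext i; simp [Finset.sum_apply, Pi.single_apply]
    have hl : ∀ (S : Finset B) (f : B → (B → ℝ)), spec V (∑ j ∈ S, f j) = ∑ j ∈ S, spec V (f j) := by
      intro S f
      induction S using Finset.induction_on with
      | empty => 
        have := spec_smul V 0 0
        simpa using this
      | insert a S ha ih => rw [Finset.sum_insert ha, Finset.sum_insert ha, spec_add, ih]
    conv_lhs => rw [this]
    rw [hl]; simp only [spec_smul]
  have hda : ∀ x (a : B → ℝ), rtr (spec (U x) (r x) * spec V a) = ∑ j, a j * d x j := by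
    intro x a
    rw [hdec a, Finset.mul_sum, rtr_sum]
    refine Finset.sum_congr rfl fun j _ => ?_
    rw [mul_smul_comm, rtr_smul]
  have hd1 : ∀ x, ∑ j, d x j = 1 := by
    intro x
    have h := hda x 1
    rw [spec_one hV', mul_one, rtr_spec (hU x), hr1] at h
    simpa using h.symm
  have hds : ∀ j, ∑ x, P x * d x j = s j := by
    intro j
    have h : rtr ((∑ x, P x • spec (U x) (r x)) * spec V (Pi.single j 1)) = s j := by
      rw [hsum, spec_mul hV, rtr_spec hV]
      simp [Pi.single_apply]
    rw [← h, Finset.sum_mul, rtr_sum]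
    refine Finset.sum_congr rfl fun x _ => ?_
    rw [smul_mul_assoc, rtr_smul]
  have e1 : relEnt (cqState P (fun x => spec (U x) (r x))) (cqState P (fun _ => spec V s))
      = (∑ x, P x * ∑ i, r x i * Real.logb 2 (P x * r x i)) -
        ∑ x, P x * ∑ j, Real.logb 2 (P x * s j) * d x j := by
    have t1 : rtr (cqState P (fun x => spec (U x) (r x)) * mlog2 (cqState P (fun x => spec (U x) (r x))))
      = ∑ x, P x * ∑ i, r x i * Real.logb 2 (P x * r x i) := by
      unfold mlog2
      rw [cq_spec, matFun_spec hW hW', spec_mul hW, rtr_spec hW, Fintype.sum_prod_type]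
      refine Finset.sum_congr rfl fun x _ => ?_
      rw [Finset.mul_sum]
      refine Finset.sum_congr rfl fun i _ => ?_
      simp only [Pi.mul_apply]
      rw [← mul_assoc]; congr 1
      exact hgl _ (mul_nonneg (hP0 x) (hr x i))
    have t2 : rtr (cqState P (fun x => spec (U x) (r x)) * mlog2 (cqState P (fun _ => spec V s)))
      = ∑ x, P x * ∑ j, Real.logb 2 (P x * s j) * d x j := by
      unfold mlog2
      rw [cq_spec P (fun _ => V), matFun_spec hZ hZ']
      have : spec (cqState 1 fun _ : X => V) (fun p : X × B => g (P p.1 * s p.2))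
        = cqState 1 (fun x => spec V (fun j => g (P x * s j))) := by
        rw [cq_spec]; simp
      rw [this, cq_mul, ← one_mul (cqState _ _), rtr_mul_cq]
      refine Finset.sum_congr rfl fun x _ => ?_
      rw [blk_one, one_mul, hda]
      simp only [Pi.mul_apply, Pi.one_apply, mul_one]
      congr 1
      refine Finset.sum_congr rfl fun j _ => ?_
      rw [hgl _ (mul_nonneg (hP0 x) (hs j))]
    unfold relEnt
    rw [mul_sub]
    change rtr (_ - _) = _
    rw [rtr_sub, t1, t2]
  rw [e1]
  have e2 : ∀ x, P x * ∑ i, r x i * Real.logb 2 (P x * r x i)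
      = P x * Real.logb 2 (P x) + P x * (∑ i, r x i * Real.log (r x i)) / Real.log 2 := by
    intro x
    rcases (hP0 x).eq_or_lt with h | h
    · simp [← h]
    · have : ∀ i, r x i * Real.logb 2 (P x * r x i) = r x i * Real.logb 2 (P x) + r x i * Real.log (r x i) / Real.log 2 := by
        intro i
        rcases (hr x i).eq_or_lt with h' | h'
        · simp [← h']
        · rw [Real.logb_mul h.ne' h'.ne', Real.logb, Real.logb]; ring
      simp only [this]
      rw [Finset.sum_add_distrib, ← Finset.sum_mul, hr1, ← Finset.sum_div]; ring
  have e3 : ∀ x, P x * ∑ j, Real.logb 2 (P x * s j) * d x j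
      = P x * Real.logb 2 (P x) + ∑ j, P x * d x j * Real.log (s j) / Real.log 2 := by
    intro x
    rcases (hP0 x).eq_or_lt with h | h
    · simp [← h]
    · have : ∀ j, Real.logb 2 (P x * s j) * d x j = d x j * Real.logb 2 (P x) + d x j * Real.log (s j) / Real.log 2 := by
        intro j
        rcases (hs j).eq_or_lt with h' | h'
        · have h0 : P x * d x j ≤ 0 := by
            rw [h', ← hds j]
            exact Finset.single_le_sum (f := fun x => P x * d x j) (fun x _ => mul_nonneg (hP0 x) (hd0 x j)) (Finset.mem_univ x)
          have : d x j = 0 := le_antisymm (by by_contra hc; push Not at hc; nlinarith [mul_pos h hc]) (hd0 x j)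
          simp [this]
        · rw [Real.logb_mul h.ne' h'.ne', Real.logb, Real.logb]; ring
      simp only [this]
      rw [Finset.sum_add_distrib, ← Finset.sum_mul, hd1, mul_add, Finset.mul_sum]
      simp only [one_mul]
      congr 1
      exact Finset.sum_congr rfl fun j _ => by ring
  simp only [e2, e3]
  rw [Finset.sum_add_distrib, Finset.sum_add_distrib, Finset.sum_comm (γ := X)]
  have e4 : ∀ j, ∑ x, P x * d x j * Real.log (s j) / Real.log 2 = s j * Real.log (s j) / Real.log 2 := by
    intro j
    rw [← Finset.sum_div, ← Finset.sum_mul, hds]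
  simp only [e4]
  rw [← Finset.sum_div, ← Finset.sum_div]
  ring

end CQ

section Tails

lemma tail_low {α : Type*} [Fintype α] (p v : α → ℝ) (hp : ∀ a, 0 ≤ p a) (hp1 : ∑ a, p a = 1)
    (hv0 : ∀ a, 0 ≤ v a) (hpv : ∀ a, v a = 0 → p a = 0) (K : ℝ)
    (hK : ∑ a, p a * (Real.log (v a) ^ 2 * Real.exp (|Real.log (v a)| / 2)) ≤ K)
    (δ : ℝ) (hδ : 0 < δ) (hδK : δ ≤ K) (n : ℕ) :
    ∑ f : Fin n → α, (if ∏ k, v (f k) < Real.exp (n * ((∑ a, p a * Real.log (v a)) - δ)) then ∏ k, p (f k) else 0)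
      ≤ Real.exp (-(n * (δ ^ 2 / (4 * K)))) := by
  classical
  have h := tail_bound p hp hp1 (fun a => -Real.log (v a)) K (by simpa using hK) δ hδ hδK n
    {f | ∏ k, v (f k) < Real.exp (n * ((∑ a, p a * Real.log (v a)) - δ)) ∧ ∀ k, v (f k) ≠ 0} (by
      rintro f ⟨h1, h2⟩
      have hpos : 0 < ∏ k, v (f k) := Finset.prod_pos fun k _ => (hv0 _).lt_of_ne (h2 k).symm
      have h3 := Real.log_lt_log hpos h1
      rw [Real.log_exp, Real.log_prod fun k _ => h2 k] at h3
      simp only [mul_neg, Finset.sum_neg_distrib]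
      linarith)
  refine le_trans (le_of_eq ?_) h
  refine Finset.sum_congr rfl fun f _ => ?_
  by_cases h1 : ∏ k, v (f k) < Real.exp (n * ((∑ a, p a * Real.log (v a)) - δ))
  · by_cases h2 : ∀ k, v (f k) ≠ 0
    · rw [if_pos h1, if_pos ⟨h1, h2⟩]
    · rw [if_pos h1, if_neg (fun h => h2 h.2)]
      push Not at h2
      obtain ⟨k, hk⟩ := h2
      exact Finset.prod_eq_zero (Finset.mem_univ k) (hpv _ hk)
  · rw [if_neg h1, if_neg (fun h => h1 h.1)]

lemma tail_high {α : Type*} [Fintype α] (p v : α → ℝ) (hp : ∀ a, 0 ≤ p a) (hp1 : ∑ a, p a = 1)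
    (K : ℝ)
    (hK : ∑ a, p a * (Real.log (v a) ^ 2 * Real.exp (|Real.log (v a)| / 2)) ≤ K)
    (δ : ℝ) (hδ : 0 < δ) (hδK : δ ≤ K) (n : ℕ) :
    ∑ f : Fin n → α, (if Real.exp (n * ((∑ a, p a * Real.log (v a)) + δ)) < ∏ k, v (f k) then ∏ k, p (f k) else 0)
      ≤ Real.exp (-(n * (δ ^ 2 / (4 * K)))) := by
  classical
  refine tail_bound p hp hp1 (fun a => Real.log (v a)) K hK δ hδ hδK n
    {f | Real.exp (n * ((∑ a, p a * Real.log (v a)) + δ)) < ∏ k, v (f k)} ?_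
  intro f h1
  have hpos : 0 < ∏ k, v (f k) := (Real.exp_pos _).trans h1
  have h3 := Real.log_lt_log (Real.exp_pos _) h1
  rw [Real.log_exp, Real.log_prod fun k _ => ?_] at h3
  · exact h3.le
  · intro h0
    exact hpos.ne' (Finset.prod_eq_zero (Finset.mem_univ k) h0)

end Tails

section IID
open scoped MatrixOrder Matrix
open Matrix

variable {X B : Type*} [Fintype X] [DecidableEq X] [Fintype B] [DecidableEq B]

lemma sum_curry {n : ℕ} (g : (Fin n → X) → (Fin n → B) → ℝ) :
    ∑ f : Fin n → X × B, g (fun k => (f k).1) (fun k => (f k).2) = ∑ xv, ∑ iv, g xv iv := by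
  rw [← Fintype.sum_prod_type']
  exact Fintype.sum_equiv (Equiv.arrowProdEquivProdArrow (Fin n) (fun _ => X) (fun _ => B)) _ _ (fun f => rfl)

/-- spectral indicator -/
def ind {m : Type*} (S : m → Prop) [DecidablePred S] : m → ℝ := fun i => if S i then 1 else 0

lemma ind_sq {m : Type*} (S : m → Prop) [DecidablePred S] : ind S * ind S = ind S := by
  ext i; simp [ind]

lemma ind_nonneg {m : Type*} (S : m → Prop) [DecidablePred S] : 0 ≤ ind S := by
  intro i; simp only [ind, Pi.zero_apply]; split_ifs <;> norm_num

lemma ind_le_one {m : Type*} (S : m → Prop) [DecidablePred S] : ind S ≤ 1 := by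
  intro i; simp only [ind, Pi.one_apply]; split_ifs <;> norm_num

lemma rtr_compl {m : Type*} [Fintype m] [DecidableEq m] {U : Matrix m m ℂ} (hU : Uᴴ * U = 1) (hU' : U * Uᴴ = 1)
    (S : m → Prop) [DecidablePred S] (a : m → ℝ) :
    rtr ((1 - spec U (ind S)) * spec U a) = ∑ i, if S i then 0 else a i := by
  rw [← spec_one hU', ← spec_sub, spec_mul hU, rtr_spec hU]
  refine Finset.sum_congr rfl fun i _ => ?_
  simp only [Pi.mul_apply, Pi.sub_apply, ind, Pi.one_apply]
  split_ifs <;> simp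

lemma iid_main (P : X → ℝ) (hP0 : ∀ x, 0 ≤ P x) (hP1 : ∑ x, P x = 1)
    (τ : X → Matrix B B ℂ) (hτ0 : ∀ x, 0 ≤ τ x) (hτ1 : ∀ x, (τ x).trace = 1) :
    ∃ I : ℝ, I = relEnt (cqState P τ) (cqState P (fun _ => ∑ x, P x • τ x)) * Real.log 2 ∧
      -(Fintype.card B : ℝ) ≤ I ∧
      ∀ δ : ℝ, 0 < δ → δ ≤ 1 → ∀ n : ℕ,
        (∃ F : (Fin n → X) → Matrix (Fin n → B) (Fin n → B) ℂ,
          (∀ xv, 0 ≤ F xv) ∧ (∀ xv, F xv ≤ 1) ∧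
          ∑ xv, (∏ k, P (xv k)) * rtr ((1 - F xv) * tensorFam (fun k => τ (xv k)))
            ≤ 5 * Real.exp (-(n * (δ ^ 2 / (64 * Fintype.card B)))) ∧
          ∑ xv, (∏ k, P (xv k)) • F xv ≤ Real.exp (-(n * (I - 2 * δ))) • 1) ∧
        (∀ F : (Fin n → X) → Matrix (Fin n → B) (Fin n → B) ℂ,
          (∀ xv, 0 ≤ F xv) → (∀ xv, F xv ≤ 1) →
          ∑ xv, (∏ k, P (xv k)) * rtr (F xv * tensorFam (fun k => τ (xv k)))
            ≤ 2 * Real.exp (n * (I + 2 * δ)) *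
                ∑ xv, (∏ k, P (xv k)) * rtr (F xv * tensorFam (fun _ => ∑ x, P x • τ x))
              + 4 * Real.exp (-(n * (δ ^ 2 / (64 * Fintype.card B))))) := by
  have hX : Nonempty X := by
    by_contra h
    rw [not_nonempty_iff] at h
    simp at hP1
  have hB : Nonempty B := by
    by_contra h
    rw [not_nonempty_iff] at h
    have := hτ1 hX.some
    simp [Matrix.trace] at this
  have hcard : (1 : ℝ) ≤ Fintype.card B := by exact_mod_cast Fintype.card_pos
  choose U r hU hU' hr0 hτs using fun x => exists_spec (hτ0 x)
  have hr1 : ∀ x, ∑ i, r x i = 1 := by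
    intro x
    rw [← rtr_spec (hU x), ← hτs, rtr, hτ1]; simp
  have hr01 : ∀ x i, r x i ≤ 1 := fun x i => by
    rw [← hr1 x]; exact Finset.single_le_sum (fun i _ => hr0 x i) (Finset.mem_univ i)
  set τb := ∑ x, P x • τ x with hτb
  have hτb0 : 0 ≤ τb := Finset.sum_nonneg fun x _ => smul_nn (hP0 x) (hτ0 x)
  obtain ⟨V, s, hV, hV', hs0, hVs⟩ := exists_spec hτb0
  have hs1 : ∑ i, s i = 1 := by
    rw [← rtr_spec hV, ← hVs, hτb, rtr_sum]
    simp only [rtr_smul]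
    simp [rtr, hτ1, hP1]
  have hs01 : ∀ i, s i ≤ 1 := fun i => by
    rw [← hs1]; exact Finset.single_le_sum (fun i _ => hs0 i) (Finset.mem_univ i)
  set mc := ∑ x, P x * ∑ i, r x i * Real.log (r x i) with hmc
  set mb := ∑ j, s j * Real.log (s j) with hmb
  have hformula := relEnt_formula P hP0 hP1 U hU hU' r hr0 hr1 V hV hV' s hs0 (by
    simp only [← hτs, ← hVs]; exact hτb.symm)
  simp only [← hτs, ← hVs] at hformula
  have hlog2 : Real.log 2 ≠ 0 := by positivity
  refine ⟨mc - mb, ?_, ?_, ?_⟩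
  · rw [hformula, div_mul_cancel₀ _ hlog2]
  · have h1 : mb ≤ 0 := Finset.sum_nonpos fun j _ =>
      mul_nonpos_of_nonneg_of_nonpos (hs0 j) (Real.log_nonpos (hs0 j) (hs01 j))
    have h2 : ∀ x i, -1 ≤ r x i * Real.log (r x i) := by
      intro x i
      rcases (hr0 x i).eq_or_lt with h | h
      · simp [← h]
      · have := Real.one_sub_inv_le_log_of_pos h
        have h3 := mul_le_mul_of_nonneg_left this h.le
        rw [mul_sub, mul_inv_cancel₀ h.ne'] at h3
        linarith
    have h3 : -(Fintype.card B : ℝ) ≤ mc := by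
      have h4 : ∀ x, P x * (-(Fintype.card B : ℝ)) ≤ P x * ∑ i, r x i * Real.log (r x i) := by
        intro x
        apply mul_le_mul_of_nonneg_left _ (hP0 x)
        have := Finset.sum_le_sum fun i (_ : i ∈ Finset.univ) => h2 x i
        simpa using this
      have := Finset.sum_le_sum fun x (_ : x ∈ Finset.univ) => h4 x
      rwa [← Finset.sum_mul, hP1, one_mul] at this
    linarith
  intro δ hδ hδ1 n
  set K : ℝ := 16 * Fintype.card B with hK
  have hδK : δ ≤ K := by rw [hK]; linarith
  have h4K : 4 * K = 64 * Fintype.card B := by rw [hK]; ring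
  rw [← h4K]
  set e := Real.exp (-(n * (δ ^ 2 / (4 * K)))) with he
  -- joint distribution data
  have hKs : ∑ j, s j * (Real.log (s j) ^ 2 * Real.exp (|Real.log (s j)| / 2)) ≤ K := by
    have := Finset.sum_le_sum fun j (_ : j ∈ Finset.univ) => log_sq_bound (s j) (hs0 j) (hs01 j)
    refine this.trans ?_
    simp [hK, mul_comm]
  set pj : X × B → ℝ := fun a => P a.1 * r a.1 a.2 with hpj
  have hpj0 : ∀ a, 0 ≤ pj a := fun a => mul_nonneg (hP0 _) (hr0 _ _)
  have hpj1 : ∑ a, pj a = 1 := by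
    simp only [hpj, Fintype.sum_prod_type, ← Finset.mul_sum, hr1, mul_one, hP1]
  have hpjm : ∑ a : X × B, pj a * Real.log (r a.1 a.2) = mc := by
    simp only [hpj, Fintype.sum_prod_type, mul_assoc, ← Finset.mul_sum]; rfl
  have hKj : ∑ a : X × B, pj a * (Real.log (r a.1 a.2) ^ 2 * Real.exp (|Real.log (r a.1 a.2)| / 2)) ≤ K := by
    simp only [hpj, Fintype.sum_prod_type, mul_assoc, ← Finset.mul_sum]
    have : ∀ x, P x * ∑ i, r x i * (Real.log (r x i) ^ 2 * Real.exp (|Real.log (r x i)| / 2)) ≤ P x * K := by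
      intro x
      apply mul_le_mul_of_nonneg_left _ (hP0 x)
      refine (Finset.sum_le_sum fun i (_ : i ∈ Finset.univ) => log_sq_bound (r x i) (hr0 x i) (hr01 x i)).trans ?_
      simp [hK, mul_comm]
    refine (Finset.sum_le_sum fun x _ => this x).trans ?_
    rw [← Finset.sum_mul, hP1, one_mul]
  have tl_c := tail_low pj (fun a => r a.1 a.2) hpj0 hpj1 (fun a => hr0 _ _) (fun a h => by simp [hpj, h]) K hKj δ hδ hδK n
  have th_c := tail_high pj (fun a => r a.1 a.2) hpj0 hpj1 K hKj δ hδ hδK n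
  have tl_b := tail_low s s hs0 hs1 hs0 (fun a h => h) K hKs δ hδ hδK n
  have th_b := tail_high s s hs0 hs1 K hKs δ hδ hδK n
  rw [hpjm] at tl_c th_c
  simp only [hpj, Finset.prod_mul_distrib] at tl_c th_c
  rw [sum_curry (fun xv iv => if ∏ k, r (xv k) (iv k) < Real.exp (n * (mc - δ)) then
    (∏ k, P (xv k)) * ∏ k, r (xv k) (iv k) else 0)] at tl_c
  rw [sum_curry (fun xv iv => if Real.exp (n * (mc + δ)) < ∏ k, r (xv k) (iv k) then
    (∏ k, P (xv k)) * ∏ k, r (xv k) (iv k) else 0)] at th_c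
  -- tensor data
  set PP : (Fin n → X) → ℝ := fun xv => ∏ k, P (xv k) with hPP
  have hPP0 : ∀ xv, 0 ≤ PP xv := fun xv => Finset.prod_nonneg fun k _ => hP0 _
  have hPP1 : ∑ xv, PP xv = 1 := by rw [hPP, prod_sum_pi, hP1, one_pow]
  set UU : (Fin n → X) → Matrix (Fin n → B) (Fin n → B) ℂ := fun xv => tensorFam (fun k => U (xv k)) with hUU
  have hUU1 : ∀ xv, (UU xv)ᴴ * UU xv = 1 := fun xv => tensorFam_unit fun k => hU _
  have hUU2 : ∀ xv, UU xv * (UU xv)ᴴ = 1 := fun xv => tensorFam_unit' fun k => hU' _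
  set rr : (Fin n → X) → (Fin n → B) → ℝ := fun xv iv => ∏ k, r (xv k) (iv k) with hrr
  have hrr0 : ∀ xv iv, 0 ≤ rr xv iv := fun xv iv => Finset.prod_nonneg fun k _ => hr0 _ _
  have hTT : ∀ xv : Fin n → X, tensorFam (fun k => τ (xv k)) = spec (UU xv) (rr xv) := by
    intro xv
    rw [← tensorFam_spec]; simp only [← hτs]
  set VV : Matrix (Fin n → B) (Fin n → B) ℂ := tensorFam (fun _ => V) with hVV
  have hVV1 : VVᴴ * VV = 1 := tensorFam_unit fun _ => hV
  have hVV2 : VV * VVᴴ = 1 := tensorFam_unit' fun _ => hV'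
  set ss : (Fin n → B) → ℝ := fun iv => ∏ k, s (iv k) with hss
  have hss0 : ∀ iv, 0 ≤ ss iv := fun iv => Finset.prod_nonneg fun k _ => hs0 _
  have hTB : tensorFam (fun _ : Fin n => τb) = spec VV ss := by
    rw [hVV, hss, ← tensorFam_spec (fun _ : Fin n => V) (fun _ => s)]; simp only [← hVs]
  have hTsum : ∑ xv, PP xv • tensorFam (fun k => τ (xv k)) = spec VV ss := by
    rw [← hTB, hτb, tensorFam_sum]
    refine Finset.sum_congr rfl fun xv _ => ?_
    rw [tensorFam_smul]
  have hTrB : ∀ M : Matrix (Fin n → B) (Fin n → B) ℂ,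
      ∑ xv, PP xv * rtr (M * spec (UU xv) (rr xv)) = rtr (M * spec VV ss) := by
    intro M
    rw [← hTsum, Finset.mul_sum, rtr_sum]
    refine Finset.sum_congr rfl fun xv _ => ?_
    rw [mul_smul_comm, rtr_smul, hTT]
  simp only [hTT, hTB]
  constructor
  · -- achievability
    set A := spec VV (ind fun iv => ss iv ≤ Real.exp (n * (mb + δ))) with hA
    have hAh : Aᴴ = A := spec_herm _ _
    have hA2 : A * A = A := by rw [hA, spec_mul hVV1, ind_sq]
    have hA1 : A ≤ 1 := by rw [← spec_one hVV2]; exact spec_mono _ (ind_le_one _)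
    set C : (Fin n → X) → Matrix (Fin n → B) (Fin n → B) ℂ := fun xv =>
      spec (UU xv) (ind fun iv => Real.exp (n * (mc - δ)) ≤ rr xv iv) with hC
    have hC0 : ∀ xv, 0 ≤ C xv := fun xv => spec_nonneg _ (ind_nonneg _)
    have hC1 : ∀ xv, C xv ≤ 1 := fun xv => by rw [← spec_one (hUU2 xv)]; exact spec_mono _ (ind_le_one _)
    refine ⟨fun xv => A * C xv * A, fun xv => conj_nonneg' (hC0 xv) hAh, ?_, ?_, ?_⟩
    · intro xv
      have := conj_mono (hC1 xv) A
      rw [hAh, mul_one, hA2] at this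
      exact this.trans hA1
    · have h1 : ∀ xv, PP xv * rtr ((1 - A * C xv * A) * spec (UU xv) (rr xv))
          ≤ 3 * (PP xv * rtr ((1 - A) * spec (UU xv) (rr xv)))
            + 2 * (PP xv * rtr ((1 - C xv) * spec (UU xv) (rr xv))) := by
        intro xv
        have := rtr_mul_mono (aba_bound hAh hA2 hA1 (hC0 xv) (hC1 xv)) (spec_nonneg (UU xv) (hrr0 xv))
        rw [add_mul, rtr_add, smul_mul_assoc, smul_mul_assoc, rtr_smul, rtr_smul] at this
        have := mul_le_mul_of_nonneg_left this (hPP0 xv)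
        linarith
      refine (Finset.sum_le_sum fun xv _ => h1 xv).trans ?_
      rw [Finset.sum_add_distrib, ← Finset.mul_sum, ← Finset.mul_sum, hTrB, hA, rtr_compl hVV1 hVV2]
      have b1 : ∑ i, (if ss i ≤ Real.exp (n * (mb + δ)) then 0 else ss i) ≤ e := by
        refine le_trans (le_of_eq ?_) th_b
        refine Finset.sum_congr rfl fun i _ => ?_
        by_cases h : ss i ≤ Real.exp (n * (mb + δ))
        · rw [if_pos h, if_neg (not_lt.mpr h)]
        · rw [if_neg h, if_pos (not_le.mp h)]
      have b2 : ∑ xv, PP xv * rtr ((1 - C xv) * spec (UU xv) (rr xv)) ≤ e := by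
        refine le_trans (le_of_eq ?_) tl_c
        refine Finset.sum_congr rfl fun xv _ => ?_
        rw [hC, rtr_compl (hUU1 xv) (hUU2 xv), Finset.mul_sum]
        refine Finset.sum_congr rfl fun i _ => ?_
        by_cases h : Real.exp (n * (mc - δ)) ≤ rr xv i
        · rw [if_pos h, if_neg (not_lt.mpr h), mul_zero]
        · rw [if_neg h, if_pos (not_le.mp h)]
      linarith
    · have h1 : ∀ xv, PP xv • (A * C xv * A) ≤
          Real.exp (-(n * (mc - δ))) • (A * (PP xv • spec (UU xv) (rr xv)) * A) := by
        intro xv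
        have h2 : C xv ≤ Real.exp (-(n * (mc - δ))) • spec (UU xv) (rr xv) := by
          rw [← spec_smul]
          apply spec_mono
          intro i
          simp only [ind, Pi.smul_apply, smul_eq_mul]
          split_ifs with h
          · rw [Real.exp_neg]
            rw [le_inv_mul_iff₀ (Real.exp_pos _)]
            simpa using h
          · exact mul_nonneg (Real.exp_nonneg _) (hrr0 _ _)
        have h3 := conj_mono h2 A
        rw [hAh] at h3
        have h4 := smul_mono' (hPP0 xv) h3
        refine h4.trans (le_of_eq ?_)
        simp only [mul_smul_comm, smul_mul_assoc]
        rw [smul_comm]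
      refine (Finset.sum_le_sum fun xv _ => h1 xv).trans ?_
      rw [← Finset.smul_sum, ← Finset.sum_mul, ← Finset.mul_sum]
      simp only [hTT] at hTsum
      rw [hTsum, hA, spec_mul hVV1, spec_mul hVV1]
      have : Real.exp (-(n * (mc - mb - 2 * δ))) = Real.exp (-(n * (mc - δ))) * Real.exp (n * (mb + δ)) := by
        rw [← Real.exp_add]; ring_nf
      rw [this, ← smul_smul]
      apply smul_mono' (Real.exp_nonneg _)
      rw [← spec_one hVV2, ← spec_smul]
      apply spec_mono
      intro i
      simp only [ind, Pi.mul_apply, Pi.smul_apply, smul_eq_mul, Pi.one_apply]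
      split_ifs with h
      · simpa using h
      · simp [Real.exp_nonneg]
  · -- converse
    intro F hF0 hF1
    set A := spec VV (ind fun iv => Real.exp (n * (mb - δ)) ≤ ss iv) with hA
    have hAh : Aᴴ = A := spec_herm _ _
    have hA2 : A * A = A := by rw [hA, spec_mul hVV1, ind_sq]
    have hA1 : A ≤ 1 := by rw [← spec_one hVV2]; exact spec_mono _ (ind_le_one _)
    set bad : (Fin n → X) → (Fin n → B) → ℝ := fun xv iv =>
      if Real.exp (n * (mc + δ)) < rr xv iv then rr xv iv else 0 with hbad
    have hbad0 : ∀ xv, 0 ≤ bad xv := fun xv iv => by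
      simp only [hbad]; split_ifs
      · exact hrr0 _ _
      · exact le_rfl
    have h1 : ∀ xv, PP xv * rtr (F xv * spec (UU xv) (rr xv))
        ≤ 2 * Real.exp (n * (mc - mb + 2 * δ)) * (PP xv * rtr (F xv * spec VV ss))
          + 2 * (PP xv * ∑ iv, bad xv iv)
          + 2 * (PP xv * rtr ((1 - A) * spec (UU xv) (rr xv))) := by
      intro xv
      have c1 := rtr_mul_mono (pinch_bound hAh hA2 (hF0 xv) (hF1 xv)) (spec_nonneg (UU xv) (hrr0 xv))
      rw [add_mul, rtr_add, smul_mul_assoc, smul_mul_assoc, rtr_smul, rtr_smul] at c1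
      have hE0 : 0 ≤ A * F xv * A := conj_nonneg' (hF0 xv) hAh
      have hE1 : A * F xv * A ≤ 1 := by
        have := conj_mono (hF1 xv) A
        rw [hAh, mul_one, hA2] at this
        exact this.trans hA1
      have c2 : spec (UU xv) (rr xv) ≤ Real.exp (n * (mc + δ)) • 1 + spec (UU xv) (bad xv) := by
        rw [← spec_one (hUU2 xv), ← spec_smul, ← spec_add]
        apply spec_mono
        intro i
        simp only [Pi.add_apply, Pi.smul_apply, Pi.one_apply, smul_eq_mul, mul_one, hbad]
        split_ifs with h
        · have := Real.exp_nonneg (n * (mc + δ)); linarith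
        · push Not at h; linarith
      have c3 := rtr_mul_mono' c2 hE0
      rw [mul_add, rtr_add, mul_smul_comm, rtr_smul, mul_one] at c3
      have c4 : rtr (A * F xv * A * spec (UU xv) (bad xv)) ≤ ∑ iv, bad xv iv := by
        have := rtr_mul_mono hE1 (spec_nonneg (UU xv) (hbad0 xv))
        rwa [one_mul, rtr_spec (hUU1 xv)] at this
      have c5 : rtr (A * F xv * A) = rtr (F xv * A) := by
        unfold rtr
        rw [Matrix.trace_mul_comm, ← mul_assoc, hA2, Matrix.trace_mul_comm]
      have c6 : A ≤ Real.exp (-(n * (mb - δ))) • spec VV ss := by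
        rw [← spec_smul]
        apply spec_mono
        intro i
        simp only [ind, Pi.smul_apply, smul_eq_mul]
        split_ifs with h
        · rw [Real.exp_neg]
          rw [le_inv_mul_iff₀ (Real.exp_pos _)]
          simpa using h
        · exact mul_nonneg (Real.exp_nonneg _) (hss0 _)
      have c7 := rtr_mul_mono' c6 (hF0 xv)
      rw [mul_smul_comm, rtr_smul] at c7
      have c8 : Real.exp (n * (mc + δ)) * rtr (A * F xv * A)
          ≤ Real.exp (n * (mc - mb + 2 * δ)) * rtr (F xv * spec VV ss) := by
        rw [c5]
        refine (mul_le_mul_of_nonneg_left c7 (Real.exp_nonneg _)).trans (le_of_eq ?_)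
        rw [← mul_assoc, ← Real.exp_add]; ring_nf
      have c9 : rtr (F xv * spec (UU xv) (rr xv)) ≤
          2 * Real.exp (n * (mc - mb + 2 * δ)) * rtr (F xv * spec VV ss) + 2 * (∑ iv, bad xv iv)
            + 2 * rtr ((1 - A) * spec (UU xv) (rr xv)) := by linarith
      have := mul_le_mul_of_nonneg_left c9 (hPP0 xv)
      linarith
    refine (Finset.sum_le_sum fun xv _ => h1 xv).trans ?_
    rw [Finset.sum_add_distrib, Finset.sum_add_distrib, ← Finset.mul_sum, ← Finset.mul_sum, ← Finset.mul_sum, hTrB, hA,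
      rtr_compl hVV1 hVV2]
    have b1 : ∑ i, (if Real.exp (n * (mb - δ)) ≤ ss i then 0 else ss i) ≤ e := by
      refine le_trans (le_of_eq ?_) tl_b
      refine Finset.sum_congr rfl fun i _ => ?_
      by_cases h : Real.exp (n * (mb - δ)) ≤ ss i
      · rw [if_pos h, if_neg (not_lt.mpr h)]
      · rw [if_neg h, if_pos (not_le.mp h)]
    have b2 : ∑ xv, PP xv * ∑ iv, bad xv iv ≤ e := by
      refine le_trans (le_of_eq ?_) th_c
      refine Finset.sum_congr rfl fun xv _ => ?_
      rw [Finset.mul_sum]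
      refine Finset.sum_congr rfl fun i _ => ?_
      simp only [hbad, mul_ite, mul_zero]
      rfl
    linarith

end IID

section Types

/-- counts -/
def cnt {n : ℕ} {S : Type*} [DecidableEq S] (s : Fin n → S) (a : S) : ℕ :=
  (Finset.univ.filter fun k => s k = a).card

lemma cnt_sum {n : ℕ} {S : Type*} [Fintype S] [DecidableEq S] (s : Fin n → S) : ∑ a, cnt s a = n := by
  unfold cnt
  have := Finset.card_eq_sum_card_fiberwise (f := s) (s := Finset.univ) (t := Finset.univ) (fun _ _ => by simp)
  rw [← this]; simp

lemma cnt_le {n : ℕ} {S : Type*} [DecidableEq S] (s : Fin n → S) (a : S) : cnt s a ≤ n := by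
  unfold cnt
  exact (Finset.card_le_univ _).trans (by simp)

lemma prod_cnt {n : ℕ} {S : Type*} [Fintype S] [DecidableEq S] (s : Fin n → S) (q : S → ℝ) :
    ∏ k, q (s k) = ∏ a, q a ^ cnt s a := by
  unfold cnt
  rw [← Finset.prod_fiberwise_of_maps_to (s := Finset.univ) (t := Finset.univ) (g := s) (fun _ _ => Finset.mem_univ _)]
  refine Finset.prod_congr rfl fun a _ => ?_
  rw [Finset.prod_congr rfl (g := fun _ => q a)]
  · simp
  · intro k hk
    rw [(Finset.mem_filter.mp hk).2]

lemma fiber_card {n : ℕ} {S : Type*} [Fintype S] [DecidableEq S] (s v : Fin n → S) :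
    (Finset.univ.filter fun π : Equiv.Perm (Fin n) => s ∘ π = v).card ≤ ∏ a, (cnt s a).factorial := by
  by_cases h : ∃ π0 : Equiv.Perm (Fin n), s ∘ π0 = v
  · obtain ⟨π0, h0⟩ := h
    have hc := DomMulAct.stabilizer_card s
    have : ∏ a, (cnt s a).factorial = Fintype.card {g : Equiv.Perm (Fin n) // s ∘ g = s} := by
      rw [hc]
      refine Finset.prod_congr rfl fun a _ => ?_
      rw [Fintype.card_subtype]; rfl
    rw [this, Fintype.card_subtype]
    refine Finset.card_le_card_of_injOn (fun π => π * π0⁻¹) ?_ ?_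
    · intro π hπ
      simp only [Finset.coe_filter, Finset.mem_univ, true_and, Set.mem_ofPred_eq] at hπ ⊢
      ext k
      have h1 := congrFun (hπ.trans h0.symm) (π0⁻¹ k)
      simpa using h1
    · intro π _ π' _ he
      simpa using he
  · push Not at h
    rw [Finset.filter_eq_empty_iff.mpr (fun {π} _ => h π)]
    simp

lemma type_bound {n : ℕ} (hn : 1 ≤ n) {S : Type*} [Fintype S] [DecidableEq S] (s : Fin n → S)
    (f : (Fin n → S) → ℝ) (hf : ∀ v, 0 ≤ f v) :
    ((n.factorial : ℝ))⁻¹ * ∑ π : Equiv.Perm (Fin n), f (s ∘ π) ≤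
      (Real.exp 1 * (n + 1)) ^ (Fintype.card S) * ∑ v, (∏ k, ((cnt s (v k) : ℝ) / n)) * f v := by
  have hn0 : (0 : ℝ) < n := by exact_mod_cast hn
  have e1 : ∑ π : Equiv.Perm (Fin n), f (s ∘ π)
      = ∑ v, ((Finset.univ.filter fun π : Equiv.Perm (Fin n) => s ∘ π = v).card : ℝ) * f v := by
    rw [← Finset.sum_fiberwise_of_maps_to (s := Finset.univ) (t := Finset.univ) (g := fun π : Equiv.Perm (Fin n) => s ∘ π)
      (fun _ _ => Finset.mem_univ _)]
    refine Finset.sum_congr rfl fun v _ => ?_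
    rw [Finset.sum_congr rfl (g := fun _ => f v)]
    · simp
    · intro π hπ
      rw [(Finset.mem_filter.mp hπ).2]
  rw [e1, Finset.mul_sum, Finset.mul_sum]
  refine Finset.sum_le_sum fun v _ => ?_
  rw [← mul_assoc, ← mul_assoc]
  apply mul_le_mul_of_nonneg_right _ (hf v)
  by_cases h : ∃ π0 : Equiv.Perm (Fin n), s ∘ π0 = v
  · obtain ⟨π0, h0⟩ := h
    have hQ : ∏ k, ((cnt s (v k) : ℝ) / n) = (∏ a, (cnt s a : ℝ) ^ cnt s a) / (n : ℝ) ^ n := by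
      have h1 : ∏ k, ((cnt s (v k) : ℝ) / n) = ∏ k, ((cnt s (s k) : ℝ) / n) := by
        rw [← h0]
        exact Equiv.prod_comp π0 (fun k => (cnt s (s k) : ℝ) / n)
      rw [h1, Finset.prod_div_distrib, prod_cnt s (fun a => (cnt s a : ℝ))]
      simp
    have hcard : ((Finset.univ.filter fun π : Equiv.Perm (Fin n) => s ∘ π = v).card : ℝ)
        ≤ ∏ a, ((cnt s a).factorial : ℝ) := by exact_mod_cast fiber_card s v
    rw [hQ, ← mul_div_assoc, le_div_iff₀ (by positivity), inv_mul_eq_div, div_mul_eq_mul_div,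
      div_le_iff₀ (by positivity)]
    have h2 : (∏ a, ((cnt s a).factorial : ℝ)) * Real.exp n ≤
        (Real.exp 1 * (n + 1)) ^ (Fintype.card S) * (∏ a, (cnt s a : ℝ) ^ cnt s a) := by
      have h3 : Real.exp n = ∏ a, Real.exp (cnt s a) := by
        rw [← Real.exp_sum]; congr 1; exact_mod_cast (cnt_sum s).symm
      have h4 : (Real.exp 1 * ((n:ℝ) + 1)) ^ (Fintype.card S) = ∏ _a : S, (Real.exp 1 * ((n:ℝ) + 1)) := by
        simp
      rw [h3, h4, ← Finset.prod_mul_distrib, ← Finset.prod_mul_distrib]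
      refine Finset.prod_le_prod (fun a _ => by positivity) fun a _ => ?_
      rw [mul_comm]
      refine (fact_bound _).trans ?_
      have : (cnt s a : ℝ) ≤ n := by exact_mod_cast cnt_le s a
      gcongr
    have h5 := pow_le_fact n
    calc _ ≤ (∏ a, ((cnt s a).factorial : ℝ)) * (Real.exp n * n.factorial) := by
          apply mul_le_mul hcard h5 (by positivity) (Finset.prod_nonneg fun a _ => by positivity)
      _ = (∏ a, ((cnt s a).factorial : ℝ)) * Real.exp n * n.factorial := by ring
      _ ≤ _ := by gcongr
  · push Not at h
    rw [Finset.filter_eq_empty_iff.mpr (fun {π} _ => h π)]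
    simp only [Finset.card_empty, Nat.cast_zero, mul_zero]
    exact mul_nonneg (by positivity) (Finset.prod_nonneg fun k _ => by positivity)

end Types

section Sym
open scoped MatrixOrder Matrix
open Matrix

variable {X B : Type*} [Fintype X] [DecidableEq X] [Fintype B] [DecidableEq B] {n : ℕ}

/-- permutation acting on indices -/
def eperm (X B : Type*) (π : Equiv.Perm (Fin n)) : ((Fin n → X) × (Fin n → B)) ≃ ((Fin n → X) × (Fin n → B)) where
  toFun p := (p.1 ∘ π, p.2 ∘ π)
  invFun p := (p.1 ∘ π.symm, p.2 ∘ π.symm)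
  left_inv p := by ext <;> simp
  right_inv p := by ext <;> simp

lemma rtr_submatrix {m : Type*} [Fintype m] [DecidableEq m] (e : m ≃ m) (M R : Matrix m m ℂ) :
    rtr (M.submatrix e e * R) = rtr (M * R.submatrix e.symm e.symm) := by
  have h1 : M.submatrix e e * R = (M * R.submatrix e.symm e.symm).submatrix e e := by
    rw [← Matrix.submatrix_mul_equiv _ _ e e e, Matrix.submatrix_submatrix]; simp
  unfold rtr
  rw [h1]
  congr 1
  simp only [Matrix.trace, Matrix.diag, Matrix.submatrix_apply]
  exact Equiv.sum_comp e (fun i => (M * R.submatrix e.symm e.symm) i i)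

lemma cq_perm (P : X → ℝ) (π : Equiv.Perm (Fin n)) (R : (Fin n → X) → Matrix (Fin n → B) (Fin n → B) ℂ) :
    (cqState (fun xv : Fin n → X => ∏ k, P (xv k)) R).submatrix (eperm X B π).symm (eperm X B π).symm
      = cqState (fun xv : Fin n → X => ∏ k, P (xv k))
        (fun xv => (R (xv ∘ π.symm)).submatrix (fun iv => iv ∘ π.symm) (fun iv => iv ∘ π.symm)) := by
  ext ⟨xv, iv⟩ ⟨yv, jv⟩
  simp only [cqState, eperm, Matrix.submatrix_apply, Matrix.of_apply, Equiv.coe_fn_symm_mk]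
  have h1 : (xv ∘ π.symm = yv ∘ π.symm) ↔ xv = yv := by
    constructor
    · intro h; ext k; have := congrFun h (π k); simpa using this
    · rintro rfl; rfl
  have h2 : ∏ k, P ((xv ∘ π.symm) k) = ∏ k, P (xv k) := Equiv.prod_comp π.symm (fun k => P (xv k))
  simp only [h1, h2]

lemma tensor_perm {𝒮 : Type*} (ρ : X → 𝒮 → Matrix B B ℂ) (π : Equiv.Perm (Fin n)) (sv : Fin n → 𝒮) (xv : Fin n → X) :
    (tensorFam fun k => ρ ((xv ∘ π.symm) k) (sv k)).submatrix (fun iv => iv ∘ π.symm) (fun iv => iv ∘ π.symm)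
      = tensorFam fun k => ρ (xv k) ((sv ∘ π) k) := by
  ext iv jv
  simp only [tensorFam, Matrix.submatrix_apply, Matrix.of_apply]
  rw [← Equiv.prod_comp π]
  simp

/-- symmetrization of a test -/
lemma symmetrize {𝒮 : Type*} (ρ : X → 𝒮 → Matrix B B ℂ) (P : X → ℝ)
    (T : Matrix ((Fin n → X) × (Fin n → B)) ((Fin n → X) × (Fin n → B)) ℂ) (h0 : 0 ≤ T) (h1 : T ≤ 1) (b : ℝ)
    (hb : ∀ σ, IsDensity σ → rtr (T * cqState (fun xv : Fin n → X => ∏ k, P (xv k)) (fun _ => σ)) ≤ b) :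
    ∃ T' : Matrix ((Fin n → X) × (Fin n → B)) ((Fin n → X) × (Fin n → B)) ℂ, 0 ≤ T' ∧ T' ≤ 1 ∧
      (∀ σ, IsDensity σ → rtr (T' * cqState (fun xv : Fin n → X => ∏ k, P (xv k)) (fun _ => σ)) ≤ b) ∧
      ∀ sv : Fin n → 𝒮, rtr ((1 - T') * cqState (fun xv : Fin n → X => ∏ k, P (xv k))
            (fun xv => tensorFam fun k => ρ (xv k) (sv k)))
        = (n.factorial : ℝ)⁻¹ * ∑ π : Equiv.Perm (Fin n),
          rtr ((1 - T) * cqState (fun xv : Fin n → X => ∏ k, P (xv k))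
            (fun xv => tensorFam fun k => ρ (xv k) ((sv ∘ π) k))) := by
  have hfac : (n.factorial : ℝ) ≠ 0 := by positivity
  have hcardP : (Finset.univ : Finset (Equiv.Perm (Fin n))).card = n.factorial := by
    rw [Finset.card_univ, Fintype.card_perm, Fintype.card_fin]
  set T' := (n.factorial : ℝ)⁻¹ • ∑ π : Equiv.Perm (Fin n), T.submatrix (eperm X B π) (eperm X B π) with hT'
  have hone : (1 : Matrix ((Fin n → X) × (Fin n → B)) ((Fin n → X) × (Fin n → B)) ℂ) - T'
      = (n.factorial : ℝ)⁻¹ • ∑ π : Equiv.Perm (Fin n), (1 - T).submatrix (eperm X B π) (eperm X B π) := by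
    have : ∀ π : Equiv.Perm (Fin n), (1 - T).submatrix (eperm X B π) (eperm X B π)
        = 1 - T.submatrix (eperm X B π) (eperm X B π) := by
      intro π
      rw [Matrix.submatrix_sub]
      simp [Matrix.submatrix_one_equiv]
    simp only [this, Finset.sum_sub_distrib, Finset.sum_const, hcardP, smul_sub, hT']
    congr 1
    rw [← Nat.cast_smul_eq_nsmul ℝ, smul_smul, inv_mul_cancel₀ hfac, one_smul]
  refine ⟨T', ?_, ?_, ?_, ?_⟩
  · exact smul_nn (by positivity) (Finset.sum_nonneg fun π _ =>
      ((Matrix.nonneg_iff_posSemidef.mp h0).submatrix _).nonneg)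
  · rw [← sub_nonneg, hone]
    exact smul_nn (by positivity) (Finset.sum_nonneg fun π _ =>
      ((Matrix.nonneg_iff_posSemidef.mp (sub_nonneg.mpr h1)).submatrix _).nonneg)
  · intro σ hσ
    rw [hT', smul_mul_assoc, rtr_smul, Finset.sum_mul, rtr_sum, inv_mul_le_iff₀ (by positivity)]
    have : ∀ π ∈ (Finset.univ : Finset (Equiv.Perm (Fin n))), rtr (T.submatrix (eperm X B π) (eperm X B π) *
        cqState (fun xv : Fin n → X => ∏ k, P (xv k)) (fun _ => σ)) ≤ b := by
      intro π _
      rw [rtr_submatrix, cq_perm]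
      apply hb
      refine ⟨hσ.1.submatrix _, ?_⟩
      rw [← hσ.2]
      simp only [Matrix.trace, Matrix.diag, Matrix.submatrix_apply]
      exact Equiv.sum_comp (Equiv.arrowCongr π (Equiv.refl B)) (fun i => σ i i)
    have := Finset.sum_le_card_nsmul _ _ _ this
    rwa [hcardP, nsmul_eq_mul] at this
  · intro sv
    rw [hone, smul_mul_assoc, rtr_smul, Finset.sum_mul, rtr_sum]
    congr 1
    refine Finset.sum_congr rfl fun π _ => ?_
    rw [rtr_submatrix, cq_perm]
    simp only [tensor_perm]

end Sym

section Ach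
open scoped MatrixOrder Matrix
open Matrix

variable {X B : Type*} [Fintype X] [DecidableEq X] [Fintype B] [DecidableEq B] {n : ℕ}

lemma rtr_cq_mono {M : Matrix (X × B) (X × B) ℂ} (hM : 0 ≤ M) {w : X → ℝ} (hw : ∀ x, 0 ≤ w x)
    {R R' : X → Matrix B B ℂ} (h : ∀ x, R x ≤ R' x) :
    rtr (M * cqState w R) ≤ rtr (M * cqState w R') := by
  rw [rtr_mul_cq, rtr_mul_cq]
  exact Finset.sum_le_sum fun x _ =>
    mul_le_mul_of_nonneg_left (rtr_mul_mono' (h x) (blk_nonneg hM x)) (hw x)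

lemma rtr_cq_nonneg {M : Matrix (X × B) (X × B) ℂ} (hM : 0 ≤ M) {w : X → ℝ} (hw : ∀ x, 0 ≤ w x)
    {R : X → Matrix B B ℂ} (h : ∀ x, 0 ≤ R x) :
    0 ≤ rtr (M * cqState w R) := by
  rw [rtr_mul_cq]
  exact Finset.sum_nonneg fun x _ => mul_nonneg (hw x) (rtr_mul_nonneg (blk_nonneg hM x) (h x))

lemma rtr_cq_monoM {M M' : Matrix (X × B) (X × B) ℂ} (hM : M ≤ M') {w : X → ℝ} (hw : ∀ x, 0 ≤ w x)
    {R : X → Matrix B B ℂ} (h : ∀ x, 0 ≤ R x) :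
    rtr (M * cqState w R) ≤ rtr (M' * cqState w R) := by
  have := rtr_cq_nonneg (sub_nonneg.mpr hM) hw h
  rw [sub_mul, rtr_sub] at this
  linarith

lemma rtr_cq_one {w : X → ℝ} (hw1 : ∑ x, w x = 1)
    {R : X → Matrix B B ℂ} (h : ∀ x, (R x).trace = 1) :
    rtr (1 * cqState w R) = 1 := by
  rw [rtr_mul_cq]
  simp only [blk_one, one_mul, rtr, h, Complex.one_re, mul_one, hw1]

lemma PP_nonneg {P : X → ℝ} (hP0 : ∀ x, 0 ≤ P x) (xv : Fin n → X) :
    0 ≤ ∏ k, P (xv k) :=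
  Finset.prod_nonneg fun _ _ => hP0 _

lemma PP_sum {P : X → ℝ} (hP1 : ∑ x, P x = 1) : ∑ xv : Fin n → X, ∏ k, P (xv k) = 1 := by
  rw [prod_sum_pi, hP1, one_pow]

lemma rtr_cq_smul (M : Matrix (X × B) (X × B) ℂ) (w : X → ℝ) (c : ℝ) (R : X → Matrix B B ℂ) :
    rtr (M * cqState w (fun x => c • R x)) = c * rtr (M * cqState w R) := by
  rw [rtr_mul_cq, rtr_mul_cq, Finset.mul_sum]
  refine Finset.sum_congr rfl fun x _ => ?_
  rw [mul_smul_comm, rtr_smul]; ring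

lemma avg_cq {S : Type*} [Fintype S] (ρ : X → S → Matrix B B ℂ) (P : X → ℝ) (w : S → ℝ)
    (M : Matrix ((Fin n → X) × (Fin n → B)) ((Fin n → X) × (Fin n → B)) ℂ) :
    ∑ sv : Fin n → S, (∏ k, w (sv k)) * rtr (M * cqState (fun xv : Fin n → X => ∏ k, P (xv k))
        (fun xv => tensorFam fun k => ρ (xv k) (sv k)))
      = rtr (M * cqState (fun xv : Fin n → X => ∏ k, P (xv k))
        (fun xv => tensorFam fun k => ∑ a, w a • ρ (xv k) a)) := by
  simp only [rtr_mul_cq, Finset.mul_sum]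
  rw [Finset.sum_comm]
  refine Finset.sum_congr rfl fun xv _ => ?_
  rw [tensorFam_sum (fun k a => w a • ρ (xv k) a), Finset.mul_sum, rtr_sum, Finset.mul_sum]
  refine Finset.sum_congr rfl fun sv _ => ?_
  rw [tensorFam_smul (fun k => w (sv k)) (fun k => ρ (xv k) (sv k)), mul_smul_comm, rtr_smul]
  ring

lemma mix_nonneg {S : Type*} [Fintype S] {ρ : S → Matrix B B ℂ} (h : ∀ s, IsDensity (ρ s)) {w : S → ℝ}
    (hw : ∀ s, 0 ≤ w s) : 0 ≤ ∑ a, w a • ρ a :=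
  Finset.sum_nonneg fun a _ => smul_nn (hw a) (h a).1.nonneg

lemma mix_trace {S : Type*} [Fintype S] {ρ : S → Matrix B B ℂ} (h : ∀ s, IsDensity (ρ s)) {w : S → ℝ}
    (hw : ∑ s, w s = 1) : (∑ a, w a • ρ a).trace = 1 := by
  rw [Matrix.trace_sum]
  simp only [Matrix.trace_smul, (h _).2]
  rw [← Finset.sum_smul, hw, one_smul]

lemma iid_test (P : X → ℝ) (hP0 : ∀ x, 0 ≤ P x) (hP1 : ∑ x, P x = 1)
    (τ : X → Matrix B B ℂ) (hτ0 : ∀ x, 0 ≤ τ x) (hτ1 : ∀ x, (τ x).trace = 1) (I0 δ : ℝ)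
    (hI0 : I0 ≤ relEnt (cqState P τ) (cqState P (fun _ => ∑ x, P x • τ x)) * Real.log 2)
    (hδ : 0 < δ) (hδ1 : δ ≤ 1) (n : ℕ) :
    ∃ G : Matrix ((Fin n → X) × (Fin n → B)) ((Fin n → X) × (Fin n → B)) ℂ, 0 ≤ G ∧ G ≤ 1 ∧
      (∀ σ, IsDensity σ → rtr (G * cqState (fun xv : Fin n → X => ∏ k, P (xv k)) (fun _ => σ))
        ≤ Real.exp (-(n * (I0 - 2 * δ)))) ∧
      rtr ((1 - G) * cqState (fun xv : Fin n → X => ∏ k, P (xv k)) (fun xv => tensorFam fun k => τ (xv k)))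
        ≤ 5 * Real.exp (-(n * (δ ^ 2 / (64 * Fintype.card B)))) := by
  obtain ⟨I, hI, -, h⟩ := iid_main P hP0 hP1 τ hτ0 hτ1
  obtain ⟨⟨F, F0, F1, hF, hF'⟩, -⟩ := h δ hδ hδ1 n
  refine ⟨cqState 1 F, cq_nonneg F0, ?_, ?_, ?_⟩
  · rw [← sub_nonneg, ← cq_one, cq_sub]
    exact cq_nonneg fun x => sub_nonneg.mpr (F1 x)
  · intro σ hσ
    rw [rtr_mul_cq]
    simp only [blk_cq]
    have h1 := rtr_mul_mono hF' hσ.1.nonneg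
    rw [Finset.sum_mul, rtr_sum] at h1
    simp only [smul_mul_assoc, rtr_smul, one_mul] at h1
    have h2 : rtr σ = 1 := by rw [rtr, hσ.2]; simp
    rw [h2, mul_one] at h1
    refine h1.trans (Real.exp_le_exp.mpr ?_)
    rw [← hI] at hI0
    have : (n:ℝ) * (I0 - 2 * δ) ≤ n * (I - 2 * δ) := by gcongr
    linarith
  · rw [rtr_mul_cq]
    simp only [blk_sub, blk_one, blk_cq]
    exact hF

lemma ach_n (hn : 1 ≤ n) {S : Type*} [Fintype S] [DecidableEq S] (ρ : X → S → Matrix B B ℂ)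
    (hρ : ∀ x s, IsDensity (ρ x s)) (P : X → ℝ) (hP0 : ∀ x, 0 ≤ P x) (hP1 : ∑ x, P x = 1)
    (I0 δ κ : ℝ)
    (hI0 : ∀ w : S → ℝ, (∀ a, 0 ≤ w a) → ∑ a, w a = 1 →
      I0 ≤ relEnt (cqState P (fun x => ∑ a, w a • ρ x a))
        (cqState P (fun _ => ∑ x, P x • ∑ a, w a • ρ x a)) * Real.log 2)
    (hδ : 0 < δ) (hδ1 : δ ≤ 1) (hκ : κ = δ ^ 2 / (64 * Fintype.card B)) :
    ∃ T : Matrix ((Fin n → X) × (Fin n → B)) ((Fin n → X) × (Fin n → B)) ℂ, 0 ≤ T ∧ T ≤ 1 ∧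
      (∀ σ, IsDensity σ → rtr (T * cqState (fun xv : Fin n → X => ∏ k, P (xv k)) (fun _ => σ))
        ≤ (n + 1) ^ (Fintype.card S) * Real.exp (n * κ) * Real.exp (-(n * (I0 - 2 * δ)))) ∧
      ∀ sv : Fin n → S, rtr ((1 - T) * cqState (fun xv : Fin n → X => ∏ k, P (xv k))
          (fun xv => tensorFam fun k => ρ (xv k) (sv k)))
        ≤ (Real.exp 1 * (n + 1)) ^ (Fintype.card S) * (6 * Real.exp (-(n * κ))) := by
  have hn0 : (0:ℝ) < n := by exact_mod_cast hn
  have key : ∀ q : S → Fin (n + 1), ∃ G : Matrix ((Fin n → X) × (Fin n → B)) ((Fin n → X) × (Fin n → B)) ℂ,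
      0 ≤ G ∧ G ≤ 1 ∧
      (∀ σ, IsDensity σ → rtr (G * cqState (fun xv : Fin n → X => ∏ k, P (xv k)) (fun _ => σ))
        ≤ Real.exp (-(n * (I0 - 2 * δ)))) ∧
      (∑ a, (q a : ℕ) = n → rtr ((1 - G) * cqState (fun xv : Fin n → X => ∏ k, P (xv k))
          (fun xv => tensorFam fun k => ∑ a, (((q a : ℕ) : ℝ) / n) • ρ (xv k) a))
        ≤ 5 * Real.exp (-(n * κ))) := by
    intro q
    by_cases hq : ∑ a, (q a : ℕ) = n
    · have w0 : ∀ a, 0 ≤ (((q a : ℕ) : ℝ) / n) := fun a => by positivity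
      have w1 : ∑ a, (((q a : ℕ) : ℝ) / n) = 1 := by
        rw [← Finset.sum_div, ← Nat.cast_sum, hq]; field_simp
      obtain ⟨G, g0, g1, g2, g3⟩ := iid_test P hP0 hP1 (fun x => ∑ a, (((q a : ℕ) : ℝ) / n) • ρ x a)
        (fun x => mix_nonneg (hρ x) w0) (fun x => mix_trace (hρ x) w1) I0 δ (hI0 _ w0 w1) hδ hδ1 n
      exact ⟨G, g0, g1, g2, fun _ => by rw [hκ]; exact g3⟩
    · refine ⟨0, le_rfl, one_nn, fun σ _ => ?_, fun h => absurd h hq⟩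
      rw [zero_mul]; simp only [rtr, Matrix.trace_zero, Complex.zero_re]; positivity
  choose G g0 g1 g2 g3 using key
  obtain ⟨T, t0, t1, t2, t3⟩ := union_test G g0 g1 (Real.exp (-(n * κ))) (Real.exp_pos _)
  have hb : ∀ σ, IsDensity σ → rtr (T * cqState (fun xv : Fin n → X => ∏ k, P (xv k)) (fun _ => σ))
        ≤ (n + 1) ^ (Fintype.card S) * Real.exp (n * κ) * Real.exp (-(n * (I0 - 2 * δ))) := by
    intro σ hσ
    refine (rtr_cq_monoM t3 (PP_nonneg hP0) (fun _ => hσ.1.nonneg)).trans ?_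
    rw [smul_mul_assoc, rtr_smul, Finset.sum_mul, rtr_sum, Real.exp_neg, inv_inv]
    have : ∑ q, rtr (G q * cqState (fun xv : Fin n → X => ∏ k, P (xv k)) (fun _ => σ))
        ≤ ∑ _q : S → Fin (n+1), Real.exp (-(n * (I0 - 2 * δ))) := Finset.sum_le_sum fun q _ => g2 q σ hσ
    rw [Finset.sum_const, Finset.card_univ, Fintype.card_fun, Fintype.card_fin, nsmul_eq_mul] at this
    push_cast at this
    calc _ ≤ Real.exp (n * κ) * ((n + 1) ^ (Fintype.card S) * Real.exp (-(n * (I0 - 2 * δ)))) := by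
          gcongr
      _ = _ := by ring
  obtain ⟨T', s0, s1, s2, s3⟩ := symmetrize ρ P T t0 t1 _ hb
  refine ⟨T', s0, s1, s2, fun sv => ?_⟩
  rw [s3 sv]
  refine (type_bound hn sv (fun sv => rtr ((1 - T) * cqState (fun xv : Fin n → X => ∏ k, P (xv k))
          (fun xv => tensorFam fun k => ρ (xv k) (sv k)))) (fun v => rtr_cq_nonneg (sub_nonneg.mpr t1) (PP_nonneg hP0)
            fun xv => tensorFam_nonneg fun k => (hρ _ _).1.nonneg)).trans ?_
  rw [avg_cq ρ P (fun a => (cnt sv a : ℝ) / n)]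
  refine mul_le_mul_of_nonneg_left ?_ (by positivity)
  let q : S → Fin (n + 1) := fun a => ⟨cnt sv a, Nat.lt_succ_of_le (cnt_le sv a)⟩
  have h3 := g3 q (cnt_sum sv)
  have w0 : ∀ a, 0 ≤ (cnt sv a : ℝ) / n := fun a => by positivity
  have w1 : ∑ a, ((cnt sv a : ℝ) / n) = 1 := by
    rw [← Finset.sum_div, ← Nat.cast_sum, cnt_sum]; field_simp
  refine (rtr_cq_monoM (t2 q) (PP_nonneg hP0) (fun xv => tensorFam_nonneg fun k => mix_nonneg (hρ _) w0)).trans ?_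
  rw [add_mul, rtr_add, smul_mul_assoc, rtr_smul,
    rtr_cq_one (PP_sum hP1) (fun xv => rtr_tensorFam fun k => mix_trace (hρ _) w1)]
  have : ∀ a, ((q a : ℕ) : ℝ) = cnt sv a := fun a => rfl
  simp only [this] at h3
  linarith

end Ach

lemma poly_exp (C κ : ℝ) (hκ : 0 < κ) (N : ℕ) :
    Tendsto (fun n : ℕ => C * ((n : ℝ) + 1) ^ N * Real.exp (-(n * κ))) atTop (nhds 0) := by
  have hr : |Real.exp (-κ)| < 1 := by
    rw [abs_of_pos (Real.exp_pos _), Real.exp_lt_one_iff]; linarith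
  have h := tendsto_pow_const_mul_const_pow_of_abs_lt_one N hr
  have h2 := ((tendsto_add_atTop_iff_nat 1).mpr h).const_mul (C * Real.exp κ)
  rw [mul_zero] at h2
  refine h2.congr fun n => ?_
  have : Real.exp (-(n * κ)) = Real.exp κ * Real.exp (-κ) ^ (n + 1) := by
    rw [← Real.exp_nat_mul, ← Real.exp_add]; congr 1; push_cast; ring
  rw [this]; push_cast; ring

section Fin
open scoped MatrixOrder Matrix
open Matrix
variable {𝒳 𝒮 : Type*} [Fintype 𝒳] [DecidableEq 𝒳] {d : ℕ}

lemma finprob_mk (ρ : 𝒳 → 𝒮 → Matrix (Fin d) (Fin d) ℂ) (S : Finset 𝒮) (w : S → ℝ) (w0 : ∀ a, 0 ≤ w a)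
    (w1 : ∑ a, w a = 1) :
    ∃ Q : FinProb 𝒮, ∀ x, (Q.1.sum fun s w => w • ρ x s) = ∑ a, w a • ρ x a := by
  classical
  let Q : 𝒮 →₀ ℝ := (Finsupp.equivFunOnFinite.symm w).embDomain (Function.Embedding.subtype _)
  have hs : ∀ {M : Type} [AddCommMonoid M] (g : 𝒮 → ℝ → M), (∀ s, g s 0 = 0) →
      Q.sum g = ∑ a : S, g a (w a) := by
    intro M _ g hg
    rw [Finsupp.sum_embDomain, Finsupp.sum_fintype _ _ (fun _ => hg _)]
    rfl
  refine ⟨⟨Q, ?_, ?_⟩, fun x => hs _ fun s => zero_smul _ _⟩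
  · intro s
    by_cases h : s ∈ S
    · have : Q s = w ⟨s, h⟩ := Finsupp.embDomain_apply_self (Function.Embedding.subtype _) (Finsupp.equivFunOnFinite.symm w) ⟨s, h⟩
      rw [this]; exact w0 _
    · have : Q s = 0 := by
        apply Finsupp.embDomain_of_notMem_range
        simpa using h
      rw [this]
  · rw [hs _ fun _ => rfl, w1]

lemma finprob_sum (Q : FinProb 𝒮) (ρ : 𝒮 → Matrix (Fin d) (Fin d) ℂ) :
    (Q.1.sum fun s w => w • ρ s) = ∑ a : Q.1.support, Q.1 a • ρ a := by
  rw [Finsupp.sum, ← Finset.sum_coe_sort]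

lemma finprob_w1 (Q : FinProb 𝒮) : ∑ a : Q.1.support, Q.1 a = 1 := by
  have := Q.2.2
  rw [Finsupp.sum, ← Finset.sum_coe_sort] at this
  exact this

lemma dens_le_one (n : ℕ) (P : 𝒳 → ℝ) (hP0 : ∀ x, 0 ≤ P x) (hP1 : ∑ x, P x = 1)
    (T : Matrix ((Fin n → 𝒳) × (Fin n → Fin d)) ((Fin n → 𝒳) × (Fin n → Fin d)) ℂ)
    (h1 : T ≤ 1) (σ : Matrix (Fin n → Fin d) (Fin n → Fin d) ℂ) (hσ : IsDensity σ) :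
    rtr (T * cqState (fun xv : Fin n → 𝒳 => ∏ k, P (xv k)) (fun _ => σ)) ≤ 1 :=
  (rtr_cq_monoM h1 (PP_nonneg hP0) (fun _ => hσ.1.nonneg)).trans
    (rtr_cq_one (PP_sum hP1) (fun _ => hσ.2)).le

lemma dens_ne (hd : 0 < d) (n : ℕ) : ∃ σ : Matrix (Fin n → Fin d) (Fin n → Fin d) ℂ, IsDensity σ := by
  let τ : Matrix (Fin d) (Fin d) ℂ := Matrix.diagonal (Pi.single ⟨0, hd⟩ 1)
  refine ⟨tensorFam fun _ => τ, ?_, ?_⟩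
  · refine Matrix.nonneg_iff_posSemidef.mp (tensorFam_nonneg fun _ => Matrix.nonneg_iff_posSemidef.mpr ?_)
    refine Matrix.PosSemidef.diagonal ?_
    intro i
    by_cases h : i = ⟨0, hd⟩
    · subst h; simp
    · simp [h]
  · refine rtr_tensorFam fun _ => ?_
    simp [τ, Matrix.trace_diagonal]

lemma beta_upper (hd : 0 < d) (ρ : 𝒳 → 𝒮 → Matrix (Fin d) (Fin d) ℂ) (P : 𝒳 → ℝ) (hP0 : ∀ x, 0 ≤ P x)
    (ε : ℝ) (n : ℕ)
    (T : Matrix ((Fin n → 𝒳) × (Fin n → Fin d)) ((Fin n → 𝒳) × (Fin n → Fin d)) ℂ)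
    (h0 : 0 ≤ T) (h1 : T ≤ 1)
    (he : ∀ sv : Fin n → 𝒮, rtr ((1 - T) * cqState (fun xv : Fin n → 𝒳 => ∏ k, P (xv k))
            (fun xv => tensorFam fun k => ρ (xv k) (sv k))) ≤ ε) (b : ℝ)
    (hb : ∀ σ, IsDensity σ → rtr (T * cqState (fun xv : Fin n → 𝒳 => ∏ k, P (xv k)) (fun _ => σ)) ≤ b) :
    betaN ρ P ε n ≤ b := by
  have hne : Nonempty {σ : Matrix (Fin n → Fin d) (Fin n → Fin d) ℂ // IsDensity σ} := by
    obtain ⟨σ, hσ⟩ := dens_ne hd n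
    exact ⟨⟨σ, hσ⟩⟩
  unfold betaN
  refine le_trans (csInf_le (a := ⨆ σ : {σ : Matrix (Fin n → Fin d) (Fin n → Fin d) ℂ // IsDensity σ},
    (Matrix.trace (T * cqState (fun xv : Fin n → 𝒳 => ∏ k, P (xv k)) (fun _ => σ.1))).re) ?_
    ⟨T, Matrix.nonneg_iff_posSemidef.mp h0, h1, he, rfl⟩) ?_
  · refine ⟨0, ?_⟩
    rintro v ⟨T, t0, -, -, rfl⟩
    exact Real.iSup_nonneg fun σ => rtr_cq_nonneg t0.nonneg (PP_nonneg hP0) fun _ => σ.2.1.nonneg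
  · exact ciSup_le fun σ => hb σ.1 σ.2

lemma beta_lower (ρ : 𝒳 → 𝒮 → Matrix (Fin d) (Fin d) ℂ) (hρ : ∀ x s, IsDensity (ρ x s))
    (P : 𝒳 → ℝ) (hP0 : ∀ x, 0 ≤ P x) (hP1 : ∑ x, P x = 1)
    (ε : ℝ) (hε : 0 ≤ ε) (n : ℕ) (Q : FinProb 𝒮) (δ : ℝ) (hδ : 0 < δ) (hδ1 : δ ≤ 1) :
    (1 - ε - 4 * Real.exp (-(n * (δ ^ 2 / (64 * d))))) / (2 * Real.exp (n * (mutInfI ρ P Q.1 * Real.log 2 + 2 * δ)))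
      ≤ betaN ρ P ε n := by
  have w0 : ∀ a : Q.1.support, 0 ≤ Q.1 a := fun a => Q.2.1 _
  have w1 := finprob_w1 Q
  set τ : 𝒳 → Matrix (Fin d) (Fin d) ℂ := fun x => Q.1.sum fun s w => w • ρ x s with hτ
  have hτe : ∀ x, τ x = ∑ a : Q.1.support, Q.1 a • ρ x a := fun x => finprob_sum Q (ρ x)
  have hτ0 : ∀ x, 0 ≤ τ x := fun x => by
    rw [hτe]; exact mix_nonneg (ρ := fun a : Q.1.support => ρ x a) (fun a => hρ x a) w0
  have hτ1 : ∀ x, (τ x).trace = 1 := fun x => by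
    rw [hτe]; exact mix_trace (ρ := fun a : Q.1.support => ρ x a) (fun a => hρ x a) w1
  obtain ⟨I, hI, -, h⟩ := iid_main P hP0 hP1 τ hτ0 hτ1
  have hI' : I = mutInfI ρ P Q.1 * Real.log 2 := hI
  obtain ⟨-, hc⟩ := h δ hδ hδ1 n
  rw [Fintype.card_fin, hI'] at hc
  refine le_csInf ?_ ?_
  · refine ⟨_, 1, Matrix.PosSemidef.one, ?_, ?_, rfl⟩
    · rw [sub_self]; exact Matrix.PosSemidef.zero
    · intro sv; simpa using hε
  · rintro v ⟨T, t0, t1, te, rfl⟩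
    have t1' : T ≤ 1 := t1
    have hF := hc (fun xv => blk T xv) (fun xv => blk_nonneg t0.nonneg xv) (fun xv => by
      rw [← sub_nonneg, ← blk_one xv, ← blk_sub]
      exact blk_nonneg (sub_nonneg.mpr t1') xv)
    rw [← rtr_mul_cq T (fun xv : Fin n → 𝒳 => ∏ k, P (xv k)) (fun xv => tensorFam fun k => τ (xv k)),
      ← rtr_mul_cq T (fun xv : Fin n → 𝒳 => ∏ k, P (xv k)) (fun _ => tensorFam fun _ => ∑ x, P x • τ x)] at hF
    have hσ : IsDensity (tensorFam fun _ : Fin n => ∑ x, P x • τ x) := by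
      have hd : ∀ x, IsDensity (τ x) := fun x => ⟨Matrix.nonneg_iff_posSemidef.mp (hτ0 x), hτ1 x⟩
      exact ⟨Matrix.nonneg_iff_posSemidef.mp (tensorFam_nonneg fun _ => mix_nonneg hd hP0),
        rtr_tensorFam fun _ => mix_trace hd hP1⟩
    have hsup := le_ciSup (f := fun σ : {σ : Matrix (Fin n → Fin d) (Fin n → Fin d) ℂ // IsDensity σ} =>
        (Matrix.trace (T * cqState (fun xv : Fin n → 𝒳 => ∏ k, P (xv k)) (fun _ => σ.1))).re)
      ⟨1, by rintro _ ⟨σ, rfl⟩; exact dens_le_one n P hP0 hP1 T t1' σ.1 σ.2⟩ ⟨_, hσ⟩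
    have herr : rtr ((1 - T) * cqState (fun xv : Fin n → 𝒳 => ∏ k, P (xv k))
        (fun xv => tensorFam fun k => τ (xv k))) ≤ ε := by
      have := avg_cq (fun x (a : Q.1.support) => ρ x a) P (fun a : Q.1.support => Q.1 a) (1 - T)
      simp only [← hτe] at this
      rw [← this]
      calc _ ≤ ∑ sv : Fin n → Q.1.support, (∏ k, Q.1 (sv k)) * ε := by
            refine Finset.sum_le_sum fun sv _ => mul_le_mul_of_nonneg_left (te fun k => (sv k : 𝒮)) ?_
            exact Finset.prod_nonneg fun k _ => w0 _
        _ = ε := by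
            rw [← Finset.sum_mul, prod_sum_pi n (fun a : Q.1.support => Q.1 a), w1]; simp
    rw [sub_mul, rtr_sub, rtr_cq_one (PP_sum hP1) (fun xv => rtr_tensorFam fun k => hτ1 _)] at herr
    rw [div_le_iff₀ (by positivity)]
    set E := 2 * Real.exp (n * (mutInfI ρ P Q.1 * Real.log 2 + 2 * δ))
    have : E * rtr (T * cqState (fun xv : Fin n → 𝒳 => ∏ k, P (xv k)) (fun _ => tensorFam fun _ => ∑ x, P x • τ x))
      ≤ E * _ := mul_le_mul_of_nonneg_left hsup (by positivity)
    rw [mul_comm]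
    linarith

lemma mutInf_bdd (ρ : 𝒳 → 𝒮 → Matrix (Fin d) (Fin d) ℂ) (hρ : ∀ x s, IsDensity (ρ x s))
    (P : 𝒳 → ℝ) (hP0 : ∀ x, 0 ≤ P x) (hP1 : ∑ x, P x = 1) (Q : FinProb 𝒮) :
    -(d : ℝ) / Real.log 2 ≤ mutInfI ρ P Q.1 := by
  have w0 : ∀ a : Q.1.support, 0 ≤ Q.1 a := fun a => Q.2.1 _
  have w1 := finprob_w1 Q
  set τ : 𝒳 → Matrix (Fin d) (Fin d) ℂ := fun x => Q.1.sum fun s w => w • ρ x s with hτ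
  have hτe : ∀ x, τ x = ∑ a : Q.1.support, Q.1 a • ρ x a := fun x => finprob_sum Q (ρ x)
  have hτ0 : ∀ x, 0 ≤ τ x := fun x => by
    rw [hτe]; exact mix_nonneg (ρ := fun a : Q.1.support => ρ x a) (fun a => hρ x a) w0
  have hτ1 : ∀ x, (τ x).trace = 1 := fun x => by
    rw [hτe]; exact mix_trace (ρ := fun a : Q.1.support => ρ x a) (fun a => hρ x a) w1
  obtain ⟨I, hI, hb, -⟩ := iid_main P hP0 hP1 τ hτ0 hτ1
  have hI' : I = mutInfI ρ P Q.1 * Real.log 2 := hI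
  rw [Fintype.card_fin] at hb
  rw [div_le_iff₀ (Real.log_pos one_lt_two), ← hI']
  exact hb

lemma ach_all (hd : 0 < d) (ρ : 𝒳 → 𝒮 → Matrix (Fin d) (Fin d) ℂ) (hρ : ∀ x s, IsDensity (ρ x s))
    (hAss : AssumptionA ρ)
    (P : 𝒳 → ℝ) (hP0 : ∀ x, 0 ≤ P x) (hP1 : ∑ x, P x = 1)
    (ε : ℝ) (hε : 0 < ε) (I0 : ℝ) (hI0 : ∀ Q : FinProb 𝒮, I0 ≤ mutInfI ρ P Q.1 * Real.log 2)
    (δ : ℝ) (hδ : 0 < δ) (hδ1 : δ ≤ 1) :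
    ∀ᶠ n : ℕ in atTop, betaN ρ P ε n ≤ Real.exp (-(n * (I0 - 4 * δ))) := by
  classical
  set κ : ℝ := δ ^ 2 / (64 * d) with hκ
  have hd' : (1:ℝ) ≤ d := by exact_mod_cast hd
  have hκ0 : 0 < κ := by positivity
  have hκδ : κ ≤ δ := by
    rw [hκ, div_le_iff₀ (by positivity)]; nlinarith
  obtain ⟨S, hS⟩ := hAss (κ / 2) (by positivity)
  have e1 := (poly_exp (Real.exp 1 ^ (Fintype.card S) * 6) (κ / 2) (by positivity) (Fintype.card S)).eventually
    (ge_mem_nhds hε)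
  have e2 := (poly_exp 1 δ hδ (Fintype.card S)).eventually (ge_mem_nhds one_pos)
  filter_upwards [e1, e2, eventually_ge_atTop 1] with n h1 h2 hn
  obtain ⟨T, t0, t1, t2, t3⟩ := ach_n (n := n) hn (fun x (a : S) => ρ x a) (fun x a => hρ x a) P hP0 hP1 I0 δ κ
    (by
      intro w w0 w1
      obtain ⟨Q, hQ⟩ := finprob_mk ρ S w w0 w1
      have := hI0 Q
      unfold mutInfI at this
      simp only [hQ] at this
      exact this) hδ hδ1 (by rw [Fintype.card_fin])
  refine beta_upper hd ρ P hP0 ε n T t0 t1 ?_ _ fun σ hσ => (t2 σ hσ).trans ?_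
  · intro sv
    choose f fS hf using hS
    have hle : ∀ xv : Fin n → 𝒳, tensorFam (fun k => ρ (xv k) (sv k)) ≤
        ((1 + κ / 2) ^ n) • tensorFam (fun k => ρ (xv k) (f (sv k))) := by
      intro xv
      have := tensorFam_smul (fun _ : Fin n => 1 + κ / 2) (fun k => ρ (xv k) (f (sv k)))
      rw [Finset.prod_const, Finset.card_univ, Fintype.card_fin] at this
      rw [← this]
      exact tensorFam_mono (fun k => (hρ _ _).1.nonneg) (fun k => hf (sv k) (xv k))
    refine (rtr_cq_mono (sub_nonneg.mpr t1) (PP_nonneg hP0) hle).trans ?_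
    rw [rtr_cq_smul]
    have h3 := t3 (fun k => ⟨f (sv k), fS _⟩)
    have h4 : (1 + κ / 2) ^ n ≤ Real.exp (n * (κ / 2)) := by
      rw [Real.exp_nat_mul]
      have := Real.add_one_le_exp (κ / 2)
      gcongr
      linarith
    calc _ ≤ Real.exp (n * (κ / 2)) * ((Real.exp 1 * (n + 1)) ^ (Fintype.card S) * (6 * Real.exp (-(n * κ)))) := by
          apply mul_le_mul h4 h3 _ (by positivity)
          exact rtr_cq_nonneg (sub_nonneg.mpr t1) (PP_nonneg hP0) fun xv => tensorFam_nonneg fun k => (hρ _ _).1.nonneg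
      _ = Real.exp 1 ^ (Fintype.card S) * 6 * ((n:ℝ) + 1) ^ (Fintype.card S) * Real.exp (-(n * (κ / 2))) := by
          have : Real.exp (-(n * (κ / 2))) = Real.exp (n * (κ / 2)) * Real.exp (-(n * κ)) := by
            rw [← Real.exp_add]; congr 1; ring
          rw [this, mul_pow]; ring
      _ ≤ ε := h1
  · rw [one_mul] at h2
    have e3 : Real.exp (-(n * (I0 - 4 * δ))) = 
      Real.exp (n * δ) * Real.exp (n * δ) * Real.exp (-(n * (I0 - 2 * δ))) := by
      rw [← Real.exp_add, ← Real.exp_add]; congr 1; ring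
    rw [e3]
    have h5 : ((n:ℝ) + 1) ^ (Fintype.card S) ≤ Real.exp (n * δ) := by
      rw [Real.exp_neg, ← div_eq_mul_inv, div_le_one (Real.exp_pos _)] at h2
      exact h2
    gcongr

lemma conv_all (hd : 0 < d) (ρ : 𝒳 → 𝒮 → Matrix (Fin d) (Fin d) ℂ) (hρ : ∀ x s, IsDensity (ρ x s))
    (P : 𝒳 → ℝ) (hP0 : ∀ x, 0 ≤ P x) (hP1 : ∑ x, P x = 1)
    (ε : ℝ) (hε : 0 ≤ ε) (hε1 : ε < 1) (Q : FinProb 𝒮) (δ : ℝ) (hδ : 0 < δ) (hδ1 : δ ≤ 1) :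
    ∀ᶠ n : ℕ in atTop, Real.exp (-(n * (mutInfI ρ P Q.1 * Real.log 2 + 3 * δ))) ≤ betaN ρ P ε n := by
  set κ : ℝ := δ ^ 2 / (64 * d) with hκ
  have hd' : (1:ℝ) ≤ d := by exact_mod_cast hd
  have hκ0 : 0 < κ := by positivity
  have e1 := (poly_exp 4 κ hκ0 0).eventually (ge_mem_nhds (show 0 < (1 - ε) / 2 by linarith))
  have e2 := (poly_exp 2 δ hδ 0).eventually (ge_mem_nhds (show 0 < (1 - ε) / 2 by linarith))
  filter_upwards [e1, e2] with n h1 h2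
  refine le_trans ?_ (beta_lower ρ hρ P hP0 hP1 ε hε n Q δ hδ hδ1)
  rw [le_div_iff₀ (by positivity), ← hκ]
  have : Real.exp (-(n * (mutInfI ρ P Q.1 * Real.log 2 + 3 * δ))) *
      (2 * Real.exp (n * (mutInfI ρ P Q.1 * Real.log 2 + 2 * δ))) = 2 * Real.exp (-(n * δ)) := by
    rw [mul_left_comm, ← Real.exp_add]; congr 2; ring
  rw [this]
  simp only [pow_zero, mul_one] at h1 h2
  linarith

lemma final_limit [Nonempty 𝒮] (ρ : 𝒳 → 𝒮 → Matrix (Fin d) (Fin d) ℂ)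
    (hρ : ∀ x s, IsDensity (ρ x s))
    (hAss : AssumptionA ρ)
    (P : 𝒳 → ℝ) (hP0 : ∀ x, 0 ≤ P x) (hP1 : ∑ x, P x = 1)
    (ε : ℝ) (hε : ε ∈ Set.Ioo (0 : ℝ) 1) :
    Tendsto (fun n : ℕ => -(1 / (n : ℝ)) * Real.logb 2 (betaN ρ P ε n)) atTop
      (nhds (⨅ Q : FinProb 𝒮, mutInfI ρ P Q.1)) := by
  have hX : Nonempty 𝒳 := by
    by_contra h
    rw [not_nonempty_iff] at h
    simp at hP1
  have hd : 0 < d := by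
    rcases Nat.eq_zero_or_pos d with h | h
    · subst h
      obtain ⟨x⟩ := hX
      obtain ⟨s⟩ := ‹Nonempty 𝒮›
      have := (hρ x s).2
      simp [Matrix.trace] at this
    · exact h
  have hQ : Nonempty (FinProb 𝒮) := by
    obtain ⟨s⟩ := ‹Nonempty 𝒮›
    classical
    refine ⟨⟨Finsupp.single s 1, fun t => ?_, by simp⟩⟩
    rw [Finsupp.single_apply]; split_ifs <;> norm_num
  have hbdd : BddBelow (Set.range fun Q : FinProb 𝒮 => mutInfI ρ P Q.1) :=
    ⟨_, by rintro _ ⟨Q, rfl⟩; exact mutInf_bdd ρ hρ P hP0 hP1 Q⟩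
  set J := ⨅ Q : FinProb 𝒮, mutInfI ρ P Q.1 with hJ
  have hl : 0 < Real.log 2 := Real.log_pos one_lt_two
  have hJQ : ∀ Q : FinProb 𝒮, J * Real.log 2 ≤ mutInfI ρ P Q.1 * Real.log 2 := fun Q =>
    mul_le_mul_of_nonneg_right (ciInf_le hbdd Q) hl.le
  rw [Metric.tendsto_atTop']
  intro γ hγ
  obtain ⟨Q, hQ⟩ := exists_lt_of_ciInf_lt (show J < J + γ / 2 by linarith)
  set δ := min 1 (γ * Real.log 2 / 10) with hδ
  have hδ0 : 0 < δ := by positivity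
  have hδ1 : δ ≤ 1 := min_le_left _ _
  have hδ2 : δ ≤ γ * Real.log 2 / 10 := min_le_right _ _
  have a1 := ach_all hd ρ hρ hAss P hP0 hP1 ε hε.1 (J * Real.log 2) hJQ δ hδ0 hδ1
  have a2 := conv_all hd ρ hρ P hP0 hP1 ε hε.1.le hε.2 Q δ hδ0 hδ1
  obtain ⟨N, hN⟩ := eventually_atTop.mp (a1.and (a2.and (eventually_ge_atTop 1)))
  refine ⟨N, fun n hn => ?_⟩
  obtain ⟨h1, h2, h3⟩ := hN n hn.le
  have hn0 : (0:ℝ) < n := by exact_mod_cast h3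
  have hpos : 0 < betaN ρ P ε n := (Real.exp_pos _).trans_le h2
  have l1 := (Real.log_le_iff_le_exp hpos).mpr h1
  have l2 := (Real.le_log_iff_exp_le hpos).mpr h2
  set L := Real.log (betaN ρ P ε n) with hL
  have e : -(1 / (n : ℝ)) * Real.logb 2 (betaN ρ P ε n) = (-L) / (n * Real.log 2) := by
    rw [Real.logb, ← hL]; field_simp
  rw [e, Real.dist_eq, abs_lt]
  have hnl : 0 < n * Real.log 2 := by positivity
  have hp : 0 < γ * Real.log 2 := by positivity
  constructor
  · rw [lt_sub_iff_add_lt, lt_div_iff₀ hnl]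
    have : n * (J * Real.log 2 - 4 * δ) > (-γ + J) * (n * Real.log 2) := by
      have : (n:ℝ) * (γ * Real.log 2 - 4 * δ) > 0 := mul_pos hn0 (by linarith)
      nlinarith
    linarith
  · rw [sub_lt_iff_lt_add, div_lt_iff₀ hnl]
    have : n * (mutInfI ρ P Q.1 * Real.log 2 + 3 * δ) < (γ + J) * (n * Real.log 2) := by
      have h6 : mutInfI ρ P Q.1 * Real.log 2 < (J + γ / 2) * Real.log 2 := mul_lt_mul_of_pos_right hQ hl
      have : (n:ℝ) * ((γ + J) * Real.log 2 - (mutInfI ρ P Q.1 * Real.log 2 + 3 * δ)) > 0 :=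
        mul_pos hn0 (by linarith)
      nlinarith
    linarith

end Fin

/-- Under Assumption A, for every `ε ∈ (0,1)` and every probability
distribution `P` on `𝒳`, the limit `lim_{n→∞} −(1/n) log₂ β_n(ε)` exists and equals
`inf_Q I[X;B]_{P,Q}`, the infimum over finitely supported distributions `Q` on `𝒮`. -/
theorem statement0 {𝒳 𝒮 : Type*} [Fintype 𝒳] [DecidableEq 𝒳] [Nonempty 𝒮] {d : ℕ}
    (ρ : 𝒳 → 𝒮 → Matrix (Fin d) (Fin d) ℂ)
    (hρ : ∀ x s, IsDensity (ρ x s))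
    (hAss : AssumptionA ρ)
    (P : 𝒳 → ℝ) (hP0 : ∀ x, 0 ≤ P x) (hP1 : ∑ x, P x = 1)
    (ε : ℝ) (hε : ε ∈ Set.Ioo (0 : ℝ) 1) :
    Tendsto (fun n : ℕ => -(1 / (n : ℝ)) * Real.logb 2 (betaN ρ P ε n)) atTop
      (nhds (⨅ Q : FinProb 𝒮, mutInfI ρ P Q.1)) := by
  exact final_limit ρ hρ hAss P hP0 hP1 ε hε
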